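/- Let α,β>−1 and let M,N≥0 be integers with M+N>0. Then the restricted square functions (G_{M,N}^{α,β})⁺(f)(θ)=(∫₀^∞ |∂_t^M δ_N^even (H_t^{α,β})⁺f(θ)|² t^{2M+2N−1} dt)^{1/2} and (G̃_{M,N}^{α,β})⁺(f)(θ)=(∫₀^∞ |∂_t^M δ_N^odd (H̃_t^{α,β})⁺f(θ)|² t^{2M+2N−1} dt)^{1/2} are bounded on L²(μ⁺_{α,β}): there is C such that ‖(G_{M,N}^{α,β})⁺(f)‖_{L²(μ⁺_{α,β})} ≤ C‖f‖_{L²(μ⁺_{α,β})} and ‖(G̃_{M,N}^{α,β})⁺(f)‖_{L²(μ⁺_{α,β})} ≤ C‖f‖_{L²(μ⁺_{α,β})} for all f∈L²(μ⁺_{α,β}). -/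

import Mathlib

open MeasureTheory Real Set
open scoped ENNReal

noncomputable section

/-- The classical Jacobi polynomial `P_n^{α,β}`. -/
def jacobiP (α β : ℝ) (n : ℕ) (x : ℝ) : ℝ :=
  ∑ m ∈ Finset.range (n + 1),
    (Real.Gamma (α + n + 1) * Real.Gamma (α + β + n + m + 1)) /
      ((m.factorial : ℝ) * ((n - m).factorial : ℝ) * Real.Gamma (α + β + n + 1) *
        Real.Gamma (α + m + 1)) * ((x - 1) / 2) ^ m

/-- `Ψ^{α,β}(θ) = |sin(θ/2)|^{α+1/2} (cos(θ/2))^{β+1/2}`. -/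
def jPsi (α β θ : ℝ) : ℝ := |Real.sin (θ / 2)| ^ (α + 1 / 2) * Real.cos (θ / 2) ^ (β + 1 / 2)

/-- The measure `μ_{α,β}` on `(−π, π)`, with density `(Ψ^{α,β})²` w.r.t. Lebesgue measure. -/
def jacobiMeasure (α β : ℝ) : Measure ℝ :=
  (volume.restrict (Ioo (-π) π)).withDensity fun θ => ENNReal.ofReal (jPsi α β θ ^ 2)

/-- The restriction `μ⁺_{α,β}` of `μ_{α,β}` to `(0, π)`. -/
def jacobiMeasurePlus (α β : ℝ) : Measure ℝ := (jacobiMeasure α β).restrict (Ioo 0 π)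

/-- The normalizing constant `c_n^{α,β}` making `𝒫_n^{α,β}` have unit `L²(μ⁺)` norm. -/
def cJ (α β : ℝ) (n : ℕ) : ℝ :=
  (∫ θ, jacobiP α β n (Real.cos θ) ^ 2 ∂(jacobiMeasurePlus α β)) ^ (-(1 / 2) : ℝ)

/-- The normalized trigonometric Jacobi polynomial `𝒫_n^{α,β}(θ)`. -/
def trigP (α β : ℝ) (n : ℕ) (θ : ℝ) : ℝ := cJ α β n * jacobiP α β n (Real.cos θ)

/-- The eigenvalue `λ_n^{α,β} = (n + (α+β+1)/2)²`. -/
def jLam (α β : ℝ) (n : ℕ) : ℝ := ((n : ℝ) + (α + β + 1) / 2) ^ 2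

/-- The symmetrized system `Φ_n^{α,β}`. -/
def symPhi (α β : ℝ) (n : ℕ) (θ : ℝ) : ℝ :=
  if Even n then (Real.sqrt 2)⁻¹ * trigP α β (n / 2) θ
  else (Real.sqrt 2)⁻¹ * (Real.sin θ / 2) * trigP (α + 1) (β + 1) ((n - 1) / 2) θ

/-- The Jacobi functions `φ_n^{α,β} = Ψ^{α,β} 𝒫_n^{α,β}`. -/
def phiFun (α β : ℝ) (n : ℕ) (θ : ℝ) : ℝ := jPsi α β θ * trigP α β n θ

/-- The symmetrized Jacobi function system `Θ_n^{α,β}`. -/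
def jTheta (α β : ℝ) (n : ℕ) (θ : ℝ) : ℝ :=
  if Even n then (Real.sqrt 2)⁻¹ * phiFun α β (n / 2) θ
  else (Real.sqrt 2)⁻¹ * Real.sign θ * phiFun (α + 1) (β + 1) ((n - 1) / 2) θ

/-- The symmetrized Jacobi–Poisson semigroup `ℍ_t^{α,β}f(θ)` (polynomial setting). -/
def symH (α β : ℝ) (f : ℝ → ℝ) (t θ : ℝ) : ℝ :=
  ∑' n : ℕ, Real.exp (-t * Real.sqrt (jLam α β ((n + 1) / 2))) *
    (∫ φ, f φ * symPhi α β n φ ∂(jacobiMeasure α β)) * symPhi α β n θ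

/-- The symmetrized Jacobi–Poisson semigroup `H̄_t^{α,β}f(θ)` (function setting). -/
def symHbar (α β : ℝ) (f : ℝ → ℝ) (t θ : ℝ) : ℝ :=
  ∑' n : ℕ, Real.exp (-t * Real.sqrt (jLam α β ((n + 1) / 2))) *
    (∫ φ in Ioo (-π) π, f φ * jTheta α β n φ) * jTheta α β n θ

/-- The non-symmetrized Jacobi–Poisson semigroup `ℋ_t^{α,β}f(θ)` (polynomial setting). -/
def jacH (α β : ℝ) (f : ℝ → ℝ) (t θ : ℝ) : ℝ :=
  ∑' n : ℕ, Real.exp (-t * Real.sqrt (jLam α β n)) *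
    (∫ φ, f φ * trigP α β n φ ∂(jacobiMeasurePlus α β)) * trigP α β n θ

/-- The non-symmetrized Jacobi–Poisson semigroup `𝓗̄_t^{α,β}f(θ)` (function setting). -/
def jacHbar (α β : ℝ) (f : ℝ → ℝ) (t θ : ℝ) : ℝ :=
  ∑' n : ℕ, Real.exp (-t * Real.sqrt (jLam α β n)) *
    (∫ φ in Ioo 0 π, f φ * phiFun α β n φ) * phiFun α β n θ

/-- The symmetrized derivative `𝔻_{α,β}`. -/
def symD (α β : ℝ) (f : ℝ → ℝ) : ℝ → ℝ := fun θ =>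
  deriv f θ + (α - β + (α + β + 1) * Real.cos θ) / Real.sin θ * ((f θ - f (-θ)) / 2)

/-- The symmetrized derivative `D̄_{α,β}` (function setting). -/
def symDbar (α β : ℝ) (f : ℝ → ℝ) : ℝ → ℝ := fun θ =>
  deriv f θ -
    ((2 * α + 1) / 4 * (Real.cos (θ / 2) / Real.sin (θ / 2)) -
      (2 * β + 1) / 4 * Real.tan (θ / 2)) * f (-θ)

/-- The derivative `D_{α,β}` (non-symmetrized function setting). -/
def jacD (α β : ℝ) (f : ℝ → ℝ) : ℝ → ℝ := fun θ =>
  deriv f θ - (2 * α + 1) / 4 * (Real.cos (θ / 2) / Real.sin (θ / 2)) * f θ +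
    (2 * β + 1) / 4 * Real.tan (θ / 2) * f θ

/-- `δ*_{α,β} = −d/dθ − (α+1/2)cot(θ/2) + (β+1/2)tan(θ/2)`. -/
def delStar (α β : ℝ) (f : ℝ → ℝ) : ℝ → ℝ := fun θ =>
  -deriv f θ - (α + 1 / 2) * (Real.cos (θ / 2) / Real.sin (θ / 2)) * f θ +
    (β + 1 / 2) * Real.tan (θ / 2) * f θ

/-- `δ_N^even`: `N` alternating factors, rightmost (first applied) one being `δ = d/dθ`. -/
def deltaEven (α β : ℝ) : ℕ → (ℝ → ℝ) → ℝ → ℝ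
  | 0 => fun f => f
  | N + 1 => fun f => (if N % 2 = 0 then deriv else delStar α β) (deltaEven α β N f)

/-- `δ_N^odd`: `N` alternating factors, rightmost (first applied) one being `δ*_{α,β}`. -/
def deltaOdd (α β : ℝ) : ℕ → (ℝ → ℝ) → ℝ → ℝ
  | 0 => fun f => f
  | N + 1 => fun f => (if N % 2 = 0 then delStar α β else deriv) (deltaOdd α β N f)

/-- The Jacobi–Poisson kernel `H_t^{α,β}(θ,φ)` (even part of the symmetrized kernel). -/
def jHker (α β t θ φ : ℝ) : ℝ :=
  (1 / 2) * ∑' n : ℕ, Real.exp (-t * Real.sqrt (jLam α β n)) * trigP α β n θ * trigP α β n φ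

/-- The kernel `H̃_t^{α,β}(θ,φ)` (odd part of the symmetrized kernel). -/
def jHtil (α β t θ φ : ℝ) : ℝ :=
  (1 / 8) * Real.sin θ * Real.sin φ *
    ∑' n : ℕ, Real.exp (-t * Real.sqrt (jLam α β (n + 1))) *
      trigP (α + 1) (β + 1) n θ * trigP (α + 1) (β + 1) n φ

/-- `μ⁺_{α,β}(B(θ,r))` where `B(θ,r) = (θ−r, θ+r) ∩ (0,π)`. -/
def ballMeasure (α β θ r : ℝ) : ℝ≥0∞ := jacobiMeasurePlus α β (Ioo (θ - r) (θ + r))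

/-- The Muckenhoupt class `A_p^{α,β}` (`1 < p < ∞`) on `(−π,π)` w.r.t. `μ_{α,β}`. -/
def IsApWeight (α β p : ℝ) (w : ℝ → ℝ) : Prop :=
  (∀ θ, 0 ≤ w θ) ∧
    ∃ C : ℝ, ∀ a b : ℝ, -π ≤ a → a ≤ b → b ≤ π →
      (∫⁻ θ in Ioo a b, ENNReal.ofReal (w θ) ∂(jacobiMeasure α β)) *
          (∫⁻ θ in Ioo a b, ENNReal.ofReal (w θ ^ (-1 / (p - 1))) ∂(jacobiMeasure α β)) ^
            (p - 1) ≤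
        ENNReal.ofReal C * jacobiMeasure α β (Ioo a b) ^ p

/-- The Muckenhoupt class `A_1^{α,β}` on `(−π,π)` w.r.t. `μ_{α,β}`. -/
def IsA1Weight (α β : ℝ) (w : ℝ → ℝ) : Prop :=
  (∀ θ, 0 ≤ w θ) ∧
    ∃ C : ℝ, ∀ a b : ℝ, -π ≤ a → a ≤ b → b ≤ π →
      ∫⁻ θ in Ioo a b, ENNReal.ofReal (w θ) ∂(jacobiMeasure α β) ≤
        ENNReal.ofReal C *
          essInf (fun θ => ENNReal.ofReal (w θ)) ((jacobiMeasure α β).restrict (Ioo a b)) *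
          jacobiMeasure α β (Ioo a b)

/-- The Muckenhoupt class `(A_p^{α,β})⁺` (`1 < p < ∞`) on `(0,π)` w.r.t. `μ⁺_{α,β}`. -/
def IsApWeightPlus (α β p : ℝ) (w : ℝ → ℝ) : Prop :=
  (∀ θ, 0 ≤ w θ) ∧
    ∃ C : ℝ, ∀ a b : ℝ, 0 ≤ a → a ≤ b → b ≤ π →
      (∫⁻ θ in Ioo a b, ENNReal.ofReal (w θ) ∂(jacobiMeasurePlus α β)) *
          (∫⁻ θ in Ioo a b, ENNReal.ofReal (w θ ^ (-1 / (p - 1))) ∂(jacobiMeasurePlus α β)) ^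
            (p - 1) ≤
        ENNReal.ofReal C * jacobiMeasurePlus α β (Ioo a b) ^ p

/-- The Muckenhoupt class `(A_1^{α,β})⁺` on `(0,π)` w.r.t. `μ⁺_{α,β}`. -/
def IsA1WeightPlus (α β : ℝ) (w : ℝ → ℝ) : Prop :=
  (∀ θ, 0 ≤ w θ) ∧
    ∃ C : ℝ, ∀ a b : ℝ, 0 ≤ a → a ≤ b → b ≤ π →
      ∫⁻ θ in Ioo a b, ENNReal.ofReal (w θ) ∂(jacobiMeasurePlus α β) ≤
        ENNReal.ofReal C *
          essInf (fun θ => ENNReal.ofReal (w θ)) ((jacobiMeasurePlus α β).restrict (Ioo a b)) *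
          jacobiMeasurePlus α β (Ioo a b)

/-- The double power weight `w_{r,s}(θ) = |sin(θ/2)|^r (cos(θ/2))^s`. -/
def wrs (r s θ : ℝ) : ℝ := |Real.sin (θ / 2)| ^ r * Real.cos (θ / 2) ^ s


/-- The restricted Poisson semigroup `(H_t^{α,β})⁺`. -/
def restH (α β : ℝ) (f : ℝ → ℝ) (t θ : ℝ) : ℝ :=
  ∑' n : ℕ, Real.exp (-t * Real.sqrt (jLam α β n)) *
    (∫ φ, f φ * symPhi α β (2 * n) φ ∂(jacobiMeasurePlus α β)) * symPhi α β (2 * n) θ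

/-- The restricted Poisson semigroup `(H̃_t^{α,β})⁺`. -/
def restHtil (α β : ℝ) (f : ℝ → ℝ) (t θ : ℝ) : ℝ :=
  ∑' n : ℕ, Real.exp (-t * Real.sqrt (jLam α β (n + 1))) *
    (∫ φ, f φ * symPhi α β (2 * n + 1) φ ∂(jacobiMeasurePlus α β)) * symPhi α β (2 * n + 1) θ

/-- The restricted square function `(G_{M,N}^{α,β})⁺`. -/
def restG (α β : ℝ) (M N : ℕ) (f : ℝ → ℝ) (θ : ℝ) : ℝ≥0∞ :=
  (∫⁻ t in Ioi (0 : ℝ), ENNReal.ofReal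
      ((deriv^[M] (fun s => deltaEven α β N (fun θ' => restH α β f s θ') θ) t) ^ 2 *
        t ^ (2 * M + 2 * N - 1))) ^ (1 / 2 : ℝ)

/-- The restricted square function `(G̃_{M,N}^{α,β})⁺`. -/
def restGtil (α β : ℝ) (M N : ℕ) (f : ℝ → ℝ) (θ : ℝ) : ℝ≥0∞ :=
  (∫⁻ t in Ioi (0 : ℝ), ENNReal.ofReal
      ((deriv^[M] (fun s => deltaOdd α β N (fun θ' => restHtil α β f s θ') θ) t) ^ 2 *
        t ^ (2 * M + 2 * N - 1))) ^ (1 / 2 : ℝ)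

/-!
The families `Φ_{2n}` and `Φ_{2n+1}` each belong to a ladder: two families `eₙ`, `oₙ`, each
orthogonal in `L²(μ⁺)` with norms at most one, such that `δ eₙ = κₙ oₙ` and `δ* oₙ = κₙ eₙ`. For a
ladder, `∂_t^M δ_N` acts on the Poisson series term by term and multiplies its `n`-th term by
`(-ℓₙ)^M κₙ^N`, up to exchanging `eₙ` and `oₙ`, where `ℓₙ = √λₙ ≥ |κₙ|`. Orthogonality in `x`,
together with Tonelli and Fatou, then bounds the square of the norm of the square function by
`∑ cₙ² ∫₀^∞ ℓₙ^{2M+2N} e^{-2tℓₙ} t^{2M+2N-1} dt ≤ (2M+2N-1)! ∑ cₙ²`, and Bessel's inequality bounds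
`∑ cₙ²` by `‖f‖²`.

Differentiating term by term needs bounds on `eₙ`, `oₙ` that are locally uniform in `x` and at most
polynomial in `n`. They come from the ladder relations alone: `κₙ` cancels in the derivative of the
energy `eₙ² + oₙ²`, so Grönwall's inequality compares its values at nearby points with constants
independent of `n`, while its integral is at most two.

The Jacobi functions form a ladder because the derivative of `P_n^{α,β}` is a multiple of
`P_{n-1}^{α+1,β+1}` and `P_n^{α,β}` solves the hypergeometric equation; their orthogonality follows
by integration by parts.
-/

section Subnormal

variable {Ω ι : Type*} [MeasurableSpace Ω] {μ : Measure Ω} {g : ι → Ω → ℝ}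

/-- A pairwise orthogonal family in the unit ball of `L²(μ)`: an orthonormal family some of whose
members may be shortened. Norms below one have to be allowed because `jacobiP α β 0` is the junk
value `0` when `α + β = -1`, where its definition divides by `Γ(0) = 0`. -/
structure IsSubnormal (μ : Measure Ω) (g : ι → Ω → ℝ) : Prop where
  memLp : ∀ n, MemLp (g n) 2 μ
  integral_mul_eq_zero : ∀ ⦃n m⦄, n ≠ m → ∫ x, g n x * g m x ∂μ = 0
  integral_sq_le_one : ∀ n, ∫ x, g n x ^ 2 ∂μ ≤ 1

namespace IsSubnormal

theorem of_orthogonal (hg : ∀ n, MemLp (g n) 2 μ)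
    (horth : ∀ ⦃n m⦄, n ≠ m → ∫ x, g n x * g m x ∂μ = 0) {a : ι → ℝ}
    (ha : ∀ n, a n ^ 2 * ∫ x, g n x ^ 2 ∂μ ≤ 1) : IsSubnormal μ fun n x => a n * g n x where
  memLp n := (hg n).const_mul (a n)
  integral_mul_eq_zero n m hnm := by
    simp only [mul_mul_mul_comm (a n) (g n _), integral_const_mul, horth hnm, mul_zero]
  integral_sq_le_one n := by
    simpa only [mul_pow, integral_const_mul] using ha n

theorem memLp_sum (hg : IsSubnormal μ g) (s : Finset ι) (r : ι → ℝ) :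
    MemLp (fun x => ∑ n ∈ s, r n * g n x) 2 μ :=
  memLp_finsetSum s fun n _ => (hg.memLp n).const_mul (r n)

theorem integral_mul_sum (hg : IsSubnormal μ g) (s : Finset ι) (r : ι → ℝ) {f : Ω → ℝ}
    (hf : MemLp f 2 μ) :
    ∫ x, f x * ∑ n ∈ s, r n * g n x ∂μ = ∑ n ∈ s, r n * ∫ x, f x * g n x ∂μ := by
  have hintegrable (n : ι) : Integrable (fun x => f x * g n x) μ := hf.integrable_mul (hg.memLp n)
  calc ∫ x, f x * ∑ n ∈ s, r n * g n x ∂μ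
      = ∫ x, ∑ n ∈ s, r n * (f x * g n x) ∂μ := by
        simp only [Finset.mul_sum, mul_left_comm]
    _ = ∑ n ∈ s, r n * ∫ x, f x * g n x ∂μ := by
        rw [integral_finsetSum s fun n _ => (hintegrable n).const_mul (r n)]
        simp only [integral_const_mul]

theorem integral_sum_sq_le (hg : IsSubnormal μ g) (s : Finset ι) (r : ι → ℝ) :
    ∫ x, (∑ n ∈ s, r n * g n x) ^ 2 ∂μ ≤ ∑ n ∈ s, r n ^ 2 := by
  have hdiag (n : ι) (hn : n ∈ s) :
      ∫ x, (∑ m ∈ s, r m * g m x) * g n x ∂μ = r n * ∫ x, g n x ^ 2 ∂μ := by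
    simp only [mul_comm _ (g n _)]
    rw [hg.integral_mul_sum s r (hg.memLp n), Finset.sum_eq_single_of_mem n hn fun m _ hmn => by
      rw [hg.integral_mul_eq_zero hmn.symm, mul_zero]]
    simp only [pow_two]
  calc ∫ x, (∑ n ∈ s, r n * g n x) ^ 2 ∂μ
      = ∑ n ∈ s, r n * ∫ x, (∑ m ∈ s, r m * g m x) * g n x ∂μ := by
        simp only [pow_two]
        exact hg.integral_mul_sum s r (hg.memLp_sum s r)
    _ = ∑ n ∈ s, r n ^ 2 * ∫ x, g n x ^ 2 ∂μ :=
        Finset.sum_congr rfl fun n hn => by rw [hdiag n hn]; ring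
    _ ≤ ∑ n ∈ s, r n ^ 2 :=
        Finset.sum_le_sum fun n _ =>
          mul_le_of_le_one_right (sq_nonneg _) (hg.integral_sq_le_one n)

theorem lintegral_sum_sq_le (hg : IsSubnormal μ g) (s : Finset ι) (r : ι → ℝ) :
    ∫⁻ x, .ofReal ((∑ n ∈ s, r n * g n x) ^ 2) ∂μ ≤ ∑ n ∈ s, .ofReal (r n ^ 2) := by
  rw [← ofReal_integral_eq_lintegral_ofReal (hg.memLp_sum s r).integrable_sq
      (.of_forall fun _ => sq_nonneg _), ← ENNReal.ofReal_sum_of_nonneg fun _ _ => sq_nonneg _]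
  exact ENNReal.ofReal_le_ofReal (hg.integral_sum_sq_le s r)

/-- Bessel's inequality: expand `0 ≤ ‖f - ∑ cₙ gₙ‖²`, where `cₙ = ⟨f, gₙ⟩`. -/
theorem sum_sq_integral_mul_le (hg : IsSubnormal μ g) (s : Finset ι) {f : Ω → ℝ}
    (hf : MemLp f 2 μ) : ∑ n ∈ s, (∫ x, f x * g n x ∂μ) ^ 2 ≤ ∫ x, f x ^ 2 ∂μ := by
  set c : ι → ℝ := fun n => ∫ x, f x * g n x ∂μ
  set S : Ω → ℝ := fun x => ∑ n ∈ s, c n * g n x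
  have hS : MemLp S 2 μ := hg.memLp_sum s c
  have hcross : ∫ x, f x * S x ∂μ = ∑ n ∈ s, c n ^ 2 := by
    rw [hg.integral_mul_sum s c hf]
    simp only [pow_two, c]
  have hsq : ∫ x, S x ^ 2 ∂μ ≤ ∑ n ∈ s, c n ^ 2 := hg.integral_sum_sq_le s c
  have hexpand : ∫ x, (f x - S x) ^ 2 ∂μ =
      ∫ x, f x ^ 2 ∂μ - 2 * ∫ x, f x * S x ∂μ + ∫ x, S x ^ 2 ∂μ := by
    have hcross_int : Integrable (fun x => 2 * (f x * S x)) μ :=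
      (hf.integrable_mul hS).const_mul 2
    have hdiff_int : Integrable (fun x => f x ^ 2 - 2 * (f x * S x)) μ :=
      hf.integrable_sq.sub hcross_int
    simp only [sub_sq, mul_assoc]
    rw [integral_add hdiff_int hS.integrable_sq, integral_sub hf.integrable_sq hcross_int,
      integral_const_mul]
  have hnonneg : 0 ≤ ∫ x, (f x - S x) ^ 2 ∂μ := integral_nonneg fun _ => sq_nonneg _
  linarith

theorem abs_integral_mul_le (hg : IsSubnormal μ g) {f : Ω → ℝ} (hf : MemLp f 2 μ) (n : ι) :
    |∫ x, f x * g n x ∂μ| ≤ √(∫ x, f x ^ 2 ∂μ) := by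
  simpa using abs_le_sqrt (by simpa using hg.sum_sq_integral_mul_le {n} hf)

theorem tsum_sq_integral_mul_le (hg : IsSubnormal μ g) {f : Ω → ℝ} (hf : MemLp f 2 μ) :
    ∑' n, .ofReal ((∫ x, f x * g n x ∂μ) ^ 2) ≤ ∫⁻ x, .ofReal (f x ^ 2) ∂μ := by
  refine ENNReal.summable.tsum_le_of_sum_le fun s => ?_
  rw [← ENNReal.ofReal_sum_of_nonneg fun _ _ => sq_nonneg _,
    ← ofReal_integral_eq_lintegral_ofReal hf.integrable_sq (.of_forall fun _ => sq_nonneg _)]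
  exact ENNReal.ofReal_le_ofReal (hg.sum_sq_integral_mul_le s hf)

end IsSubnormal

end Subnormal

section SquareFunction

open Filter

variable {Ω T : Type*} [MeasurableSpace Ω] [MeasurableSpace T] {μ : Measure Ω} {ν : Measure T}
  {g : ℕ → Ω → ℝ} {r : ℕ → T → ℝ} {w : T → ℝ} {h : Ω → T → ℝ}

theorem lintegral_sq_mul_le_liminf (hr : ∀ n, Measurable (r n)) (hw : Measurable w) (a : ℕ → ℝ)
    {k : T → ℝ} (hk : ∀ᵐ t ∂ν, HasSum (fun n => r n t * a n) (k t)) :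
    ∫⁻ t, .ofReal (k t ^ 2 * w t) ∂ν ≤
      liminf (fun m => ∫⁻ t, .ofReal ((∑ n ∈ Finset.range m, r n t * a n) ^ 2 * w t) ∂ν)
        atTop := by
  refine le_trans (lintegral_mono_ae ?_) (lintegral_liminf_le fun m => by fun_prop)
  filter_upwards [hk] with t ht
  exact (ENNReal.tendsto_ofReal ((ht.tendsto_sum_nat.pow 2).mul_const (w t))).liminf_eq.ge

theorem aemeasurable_partialSum_sq_mul [SFinite ν] (hg : ∀ n, AEMeasurable (g n) μ)
    (hr : ∀ n, Measurable (r n)) (hw : Measurable w) (m : ℕ) :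
    AEMeasurable (fun z : Ω × T =>
      ENNReal.ofReal ((∑ n ∈ Finset.range m, r n z.2 * g n z.1) ^ 2 * w z.2)) (μ.prod ν) := by
  have (n : ℕ) : AEMeasurable (fun z : Ω × T => g n z.1) (μ.prod ν) :=
    (hg n).comp_quasiMeasurePreserving Measure.quasiMeasurePreserving_fst
  fun_prop

theorem IsSubnormal.lintegral_partialSum_sq_le [SFinite μ] [SFinite ν] (hg : IsSubnormal μ g)
    (hr : ∀ n, Measurable (r n)) (hw : Measurable w) (hw0 : ∀ᵐ t ∂ν, 0 ≤ w t) (m : ℕ) :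
    ∫⁻ x, ∫⁻ t, .ofReal ((∑ n ∈ Finset.range m, r n t * g n x) ^ 2 * w t) ∂ν ∂μ ≤
      ∑' n, ∫⁻ t, .ofReal (r n t ^ 2 * w t) ∂ν := by
  have hmeas := aemeasurable_partialSum_sq_mul (ν := ν) (fun n => (hg.memLp n).aemeasurable) hr hw m
  have hinner : ∀ᵐ t ∂ν,
      ∫⁻ x, .ofReal ((∑ n ∈ Finset.range m, r n t * g n x) ^ 2 * w t) ∂μ ≤
        ∑ n ∈ Finset.range m, .ofReal (r n t ^ 2 * w t) := by
    filter_upwards [hw0] with t ht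
    simp only [ENNReal.ofReal_mul' ht]
    rw [lintegral_mul_const' _ _ ENNReal.ofReal_ne_top, ← Finset.sum_mul]
    gcongr
    exact hg.lintegral_sum_sq_le _ _
  calc ∫⁻ x, ∫⁻ t, .ofReal ((∑ n ∈ Finset.range m, r n t * g n x) ^ 2 * w t) ∂ν ∂μ
      = ∫⁻ t, ∫⁻ x, .ofReal ((∑ n ∈ Finset.range m, r n t * g n x) ^ 2 * w t) ∂μ ∂ν :=
        lintegral_lintegral_swap hmeas
    _ ≤ ∫⁻ t, ∑ n ∈ Finset.range m, .ofReal (r n t ^ 2 * w t) ∂ν := lintegral_mono_ae hinner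
    _ = ∑ n ∈ Finset.range m, ∫⁻ t, .ofReal (r n t ^ 2 * w t) ∂ν :=
        lintegral_finsetSum _ fun n _ => by fun_prop
    _ ≤ ∑' n, ∫⁻ t, .ofReal (r n t ^ 2 * w t) ∂ν := ENNReal.sum_le_tsum _

theorem IsSubnormal.lintegral_lintegral_sq_le_tsum [SFinite μ] [SFinite ν] (hg : IsSubnormal μ g)
    (hr : ∀ n, Measurable (r n)) (hw : Measurable w) (hw0 : ∀ᵐ t ∂ν, 0 ≤ w t)
    (hh : ∀ᵐ x ∂μ, ∀ᵐ t ∂ν, HasSum (fun n => r n t * g n x) (h x t)) :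
    ∫⁻ x, ∫⁻ t, .ofReal (h x t ^ 2 * w t) ∂ν ∂μ ≤ ∑' n, ∫⁻ t, .ofReal (r n t ^ 2 * w t) ∂ν := by
  set F : ℕ → Ω → ℝ≥0∞ := fun m x =>
    ∫⁻ t, .ofReal ((∑ n ∈ Finset.range m, r n t * g n x) ^ 2 * w t) ∂ν
  have hF (m : ℕ) : AEMeasurable (F m) μ :=
    (aemeasurable_partialSum_sq_mul (fun n => (hg.memLp n).aemeasurable) hr hw
      m).lintegral_prod_right'
  calc ∫⁻ x, ∫⁻ t, .ofReal (h x t ^ 2 * w t) ∂ν ∂μ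
      ≤ ∫⁻ x, liminf (fun m => F m x) atTop ∂μ :=
        lintegral_mono_ae <| hh.mono fun x hx => lintegral_sq_mul_le_liminf hr hw (g · x) hx
    _ ≤ liminf (fun m => ∫⁻ x, F m x ∂μ) atTop := lintegral_liminf_le' hF
    _ ≤ ∑' n, ∫⁻ t, .ofReal (r n t ^ 2 * w t) ∂ν :=
        liminf_le_of_frequently_le' <| .of_forall <| hg.lintegral_partialSum_sq_le hr hw hw0

end SquareFunction

section TimeIntegral

theorem lintegral_pow_mul_exp_neg_mul (p : ℕ) {b : ℝ} (hb : 0 < b) :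
    ∫⁻ t in Ioi (0 : ℝ), .ofReal (t ^ p * exp (-(b * t))) =
      .ofReal (p.factorial / b ^ (p + 1)) := by
  have hintegrable : IntegrableOn (fun t : ℝ => t ^ p * exp (-(b * t))) (Ioi 0) := by
    simpa [neg_mul] using integrableOn_rpow_mul_exp_neg_mul_rpow (p := 1) (s := p) (b := b)
      (by have := p.cast_nonneg (α := ℝ); linarith) one_pos hb
  have hval : ∫ t in Ioi (0 : ℝ), t ^ p * exp (-(b * t)) = p.factorial / b ^ (p + 1) := by
    have h := integral_rpow_mul_exp_neg_mul_Ioi (a := p + 1) (r := b) (by positivity) hb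
    rw [Gamma_nat_eq_factorial] at h
    simp only [add_sub_cancel_right, rpow_natCast] at h
    rw [h, ← Nat.cast_succ, rpow_natCast, one_div_pow, one_div_mul_eq_div]
  rw [← ofReal_integral_eq_lintegral_ofReal hintegrable, hval]
  filter_upwards [ae_restrict_mem measurableSet_Ioi] with t ht
  have := mem_Ioi.1 ht
  positivity

theorem sq_exp_mul_le {ℓ k : ℝ} (hk : |k| ≤ ℓ) (c t : ℝ) (M N : ℕ) :
    (exp (-t * ℓ) * ((-ℓ) ^ M * (k ^ N * c))) ^ 2 ≤
      c ^ 2 * ℓ ^ (2 * M + 2 * N) * exp (-(2 * ℓ * t)) := by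
  have hexp : exp (-t * ℓ) ^ 2 = exp (-(2 * ℓ * t)) := by
    rw [← exp_nat_mul]
    ring_nf
  have hℓM : ((-ℓ) ^ M) ^ 2 = ℓ ^ (2 * M) := by
    rw [← pow_mul, mul_comm M 2, (even_two_mul M).neg_pow]
  have hkN : (k ^ N) ^ 2 ≤ ℓ ^ (2 * N) := by
    rw [← pow_mul, mul_comm N 2, pow_mul, pow_mul, ← sq_abs k]
    gcongr
  calc (exp (-t * ℓ) * ((-ℓ) ^ M * (k ^ N * c))) ^ 2
      = c ^ 2 * (((-ℓ) ^ M) ^ 2 * (k ^ N) ^ 2) * exp (-t * ℓ) ^ 2 := by ring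
    _ ≤ c ^ 2 * ℓ ^ (2 * M + 2 * N) * exp (-(2 * ℓ * t)) := by
      rw [hexp, hℓM, pow_add]
      have := pow_nonneg ((abs_nonneg k).trans hk) (2 * M)
      gcongr

theorem lintegral_sq_exp_mul_pow_le {ℓ k : ℝ} (hk : |k| ≤ ℓ) (c : ℝ) {M N : ℕ} (hMN : 0 < M + N) :
    ∫⁻ t in Ioi (0 : ℝ),
        .ofReal ((exp (-t * ℓ) * ((-ℓ) ^ M * (k ^ N * c))) ^ 2 * t ^ (2 * M + 2 * N - 1)) ≤
      .ofReal ((2 * M + 2 * N - 1).factorial) * .ofReal (c ^ 2) := by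
  obtain hℓ | hℓ := ((abs_nonneg k).trans hk).eq_or_lt
  · obtain rfl : k = 0 := abs_nonpos_iff.1 (hk.trans hℓ.ge)
    have hzero : (-ℓ) ^ M * ((0 : ℝ) ^ N * c) = 0 := by
      rw [← hℓ, neg_zero, ← mul_assoc, ← pow_add, zero_pow hMN.ne', zero_mul]
    simp [hzero]
  set p := 2 * M + 2 * N - 1
  have hp : 2 * M + 2 * N = p + 1 := by omega
  calc _ ≤ ∫⁻ t in Ioi (0 : ℝ),
          .ofReal (c ^ 2 * ℓ ^ (p + 1)) * .ofReal (t ^ p * exp (-(2 * ℓ * t))) := by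
        refine setLIntegral_mono' measurableSet_Ioi fun t ht => ?_
        rw [← ENNReal.ofReal_mul (by positivity)]
        refine ENNReal.ofReal_le_ofReal ?_
        calc _ ≤ c ^ 2 * ℓ ^ (2 * M + 2 * N) * exp (-(2 * ℓ * t)) * t ^ p :=
              mul_le_mul_of_nonneg_right (sq_exp_mul_le hk c t M N) (pow_nonneg (le_of_lt ht) p)
          _ = c ^ 2 * ℓ ^ (p + 1) * (t ^ p * exp (-(2 * ℓ * t))) := by rw [hp]; ring
    _ = .ofReal (c ^ 2 * ℓ ^ (p + 1) * (p.factorial / (2 * ℓ) ^ (p + 1))) := by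
        rw [lintegral_const_mul' _ _ ENNReal.ofReal_ne_top,
          lintegral_pow_mul_exp_neg_mul p (by positivity), ← ENNReal.ofReal_mul (by positivity)]
    _ ≤ .ofReal p.factorial * .ofReal (c ^ 2) := by
        rw [← ENNReal.ofReal_mul (by positivity)]
        refine ENNReal.ofReal_le_ofReal ?_
        calc c ^ 2 * ℓ ^ (p + 1) * (p.factorial / (2 * ℓ) ^ (p + 1))
            = p.factorial * c ^ 2 / 2 ^ (p + 1) := by rw [mul_pow]; field_simp
          _ ≤ p.factorial * c ^ 2 := div_le_self (by positivity) (one_le_pow₀ one_le_two)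

end TimeIntegral

section Growth

open Filter Asymptotics

/-- Sequences that are `o(n⁻ᵏ)` for every `k`. -/
abbrev IsRapidlyDecreasing (b : ℕ → ℝ) : Prop :=
  SuperpolynomialDecay atTop (fun n : ℕ => (n : ℝ)) b

/-- Sequences that are `O(nᵏ)` for some `k`; these are the multipliers of the rapidly decreasing
sequences. -/
def HasPolynomialGrowth (d : ℕ → ℝ) : Prop :=
  ∃ k : ℕ, d =O[atTop] fun n : ℕ => (n : ℝ) ^ k

namespace HasPolynomialGrowth

variable {d d' : ℕ → ℝ}

theorem of_bounded {C : ℝ} (h : ∀ n, |d n| ≤ C) : HasPolynomialGrowth d :=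
  ⟨0, .of_bound C (.of_forall fun n => by simpa using h n)⟩

theorem mul (h : HasPolynomialGrowth d) (h' : HasPolynomialGrowth d') :
    HasPolynomialGrowth fun n => d n * d' n := by
  obtain ⟨⟨k, hk⟩, ⟨k', hk'⟩⟩ := h, h'
  exact ⟨k + k', by simpa only [pow_add] using hk.mul hk'⟩

theorem pow (h : HasPolynomialGrowth d) (m : ℕ) : HasPolynomialGrowth fun n => d n ^ m := by
  obtain ⟨k, hk⟩ := h
  exact ⟨k * m, by simpa only [pow_mul] using hk.pow m⟩

theorem neg (h : HasPolynomialGrowth d) : HasPolynomialGrowth fun n => -d n :=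
  h.imp fun _ hk => hk.neg_left

theorem mono (h : HasPolynomialGrowth d') (hd : ∀ n, |d n| ≤ d' n) : HasPolynomialGrowth d :=
  h.imp fun _ hk => (IsBigO.of_norm_le hd).trans hk

theorem of_abs_sub_le {B : ℝ} (h : ∀ n : ℕ, |d n - n| ≤ B) : HasPolynomialGrowth d := by
  refine ⟨1, .of_bound (B + 1) ?_⟩
  filter_upwards [eventually_ge_atTop 1] with n hn
  have hn' : (1 : ℝ) ≤ n := by exact_mod_cast hn
  have hB : 0 ≤ B := (abs_nonneg _).trans (h 0)
  calc |d n| = |(d n - n) + n| := by rw [sub_add_cancel]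
    _ ≤ B + n := (abs_add_le _ _).trans (add_le_add (h n) (Nat.abs_cast n).le)
    _ ≤ (B + 1) * ‖(n : ℝ) ^ 1‖ := by
      rw [pow_one, norm_natCast]
      nlinarith

end HasPolynomialGrowth

namespace IsRapidlyDecreasing

variable {b d : ℕ → ℝ}

theorem mul_growth (hb : IsRapidlyDecreasing b) (hd : HasPolynomialGrowth d) :
    IsRapidlyDecreasing fun n => b n * d n := by
  obtain ⟨k, hk⟩ := hd
  refine (superpolynomialDecay_iff_isBigO _ tendsto_natCast_atTop_atTop).2 fun z => ?_
  exact ((isBigO_refl b atTop).mul hk).trans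
    ((superpolynomialDecay_iff_isBigO _ tendsto_natCast_atTop_atTop).1 (hb.mul_param_pow k) z)

theorem summable (hb : IsRapidlyDecreasing b) : Summable b := by
  have h := (superpolynomialDecay_iff_isBigO _ tendsto_natCast_atTop_atTop).1 hb (-2)
  refine summable_of_isBigO_nat (Real.summable_nat_pow_inv.2 one_lt_two) (h.congr_right fun n => ?_)
  rw [zpow_neg]
  norm_cast

end IsRapidlyDecreasing

end Growth

section PoissonSeries

open Filter Topology

/-- Nonnegative frequencies at bounded distance from the natural numbers. -/
structure IsLinearSpectrum (ℓ : ℕ → ℝ) : Prop where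
  nonneg : ∀ n, 0 ≤ ℓ n
  exists_abs_sub_le : ∃ B, ∀ n : ℕ, |ℓ n - n| ≤ B

namespace IsLinearSpectrum

variable {ℓ d : ℕ → ℝ} {t : ℝ}

theorem hasPolynomialGrowth (hℓ : IsLinearSpectrum ℓ) : HasPolynomialGrowth ℓ :=
  hℓ.exists_abs_sub_le.elim fun _ hB => .of_abs_sub_le hB

theorem isRapidlyDecreasing_exp (hℓ : IsLinearSpectrum ℓ) (ht : 0 < t) :
    IsRapidlyDecreasing fun n => exp (-t * ℓ n) := by
  obtain ⟨B, hB⟩ := hℓ.exists_abs_sub_le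
  have hgeom : IsRapidlyDecreasing fun n => exp (-t) ^ n := fun k =>
    tendsto_pow_const_mul_const_pow_of_lt_one k (exp_nonneg _) (exp_lt_one_iff.2 (neg_lt_zero.2 ht))
  refine (hgeom.const_mul (exp (t * B))).trans_abs_le fun n => ?_
  rw [abs_exp, ← exp_nat_mul, ← exp_add, abs_exp, exp_le_exp]
  nlinarith [neg_le_of_abs_le (hB n)]

theorem summable_exp_mul (hℓ : IsLinearSpectrum ℓ) (hd : HasPolynomialGrowth d) (ht : 0 < t) :
    Summable fun n => exp (-t * ℓ n) * d n :=
  ((hℓ.isRapidlyDecreasing_exp ht).mul_growth hd).summable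

theorem hasDerivAt_tsum_exp_mul (hℓ : IsLinearSpectrum ℓ) (hd : HasPolynomialGrowth d)
    (ht : 0 < t) :
    HasDerivAt (fun s => ∑' n, exp (-s * ℓ n) * d n) (∑' n, exp (-t * ℓ n) * (-ℓ n * d n)) t := by
  have hmem : t ∈ Ioi (t / 2) := half_lt_self ht
  have hbound : Summable fun n => |exp (-(t / 2) * ℓ n) * (-ℓ n * d n)| :=
    (hℓ.summable_exp_mul (hℓ.hasPolynomialGrowth.neg.mul hd) (half_pos ht)).abs
  refine hasDerivAt_tsum_of_isPreconnected (g := fun n s => exp (-s * ℓ n) * d n)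
    (g' := fun n s => exp (-s * ℓ n) * (-ℓ n * d n)) hbound isOpen_Ioi isPreconnected_Ioi ?_ ?_
    hmem (hℓ.summable_exp_mul hd ht) hmem
  · intro n s _
    have h := (((hasDerivAt_neg s).mul_const (ℓ n)).exp).mul_const (d n)
    exact h.congr_deriv (by ring)
  · intro n s hs
    rw [norm_eq_abs, abs_mul, abs_mul (exp (-(t / 2) * ℓ n)), abs_exp, abs_exp]
    gcongr
    · exact hℓ.nonneg n
    · exact le_of_lt hs

theorem iterate_deriv_tsum_exp_mul (hℓ : IsLinearSpectrum ℓ) (hd : HasPolynomialGrowth d)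
    {F : ℝ → ℝ} (hF : ∀ s, 0 < s → F s = ∑' n, exp (-s * ℓ n) * d n) (M : ℕ) (ht : 0 < t) :
    deriv^[M] F t = ∑' n, exp (-t * ℓ n) * ((-ℓ n) ^ M * d n) := by
  induction M generalizing t with
  | zero => simpa using hF t ht
  | succ M ih =>
    have hlocal : deriv^[M] F =ᶠ[𝓝 t] fun s => ∑' n, exp (-s * ℓ n) * ((-ℓ n) ^ M * d n) :=
      (eventually_gt_nhds ht).mono fun s hs => ih hs
    have hderiv := hℓ.hasDerivAt_tsum_exp_mul ((hℓ.hasPolynomialGrowth.neg.pow M).mul hd) ht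
    rw [Function.iterate_succ_apply', hlocal.deriv_eq, hderiv.deriv]
    simp only [pow_succ', mul_assoc]

end IsLinearSpectrum

end PoissonSeries

section Gronwall

variable {E : Type*} [NormedAddCommGroup E] [NormedSpace ℝ E] {F F' : ℝ → E} {a b K x y : ℝ}

theorem norm_le_exp_mul_norm_of_norm_deriv_le_of_le
    (hF : ∀ z ∈ Icc a b, HasDerivAt F (F' z) z) (hK : ∀ z ∈ Icc a b, ‖F' z‖ ≤ K * ‖F z‖)
    (hx : x ∈ Icc a b) (hy : y ∈ Icc a b) (hxy : x ≤ y) :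
    ‖F y‖ ≤ exp (K * (y - x)) * ‖F x‖ := by
  have hsub : Icc x y ⊆ Icc a b := Icc_subset_Icc hx.1 hy.2
  have h := norm_le_gronwallBound_of_norm_deriv_right_le (f := F) (f' := F') (K := K) (ε := 0)
    (fun z hz => (hF z (hsub hz)).continuousAt.continuousWithinAt)
    (fun z hz => (hF z (hsub (Ico_subset_Icc_self hz))).hasDerivWithinAt) le_rfl
    (fun z hz => by simpa using hK z (hsub (Ico_subset_Icc_self hz))) y (right_mem_Icc.2 hxy)
  rwa [gronwallBound_ε0, mul_comm] at h

theorem norm_le_exp_mul_norm_of_norm_deriv_le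
    (hF : ∀ z ∈ Icc a b, HasDerivAt F (F' z) z) (hK : ∀ z ∈ Icc a b, ‖F' z‖ ≤ K * ‖F z‖)
    (hx : x ∈ Icc a b) (hy : y ∈ Icc a b) :
    ‖F y‖ ≤ exp (K * |y - x|) * ‖F x‖ := by
  obtain hxy | hyx := le_total x y
  · rw [abs_of_nonneg (sub_nonneg.2 hxy)]
    exact norm_le_exp_mul_norm_of_norm_deriv_le_of_le hF hK hx hy hxy
  · have hneg {z : ℝ} (hz : z ∈ Icc (-b) (-a)) : -z ∈ Icc a b :=
      ⟨le_neg.1 hz.2, neg_le.1 hz.1⟩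
    have hreflect := norm_le_exp_mul_norm_of_norm_deriv_le_of_le (F := fun z => F (-z))
      (F' := fun z => -F' (-z)) (a := -b) (b := -a) (x := -x) (y := -y) (K := K)
      (fun z hz => ((hF (-z) (hneg hz)).scomp z (hasDerivAt_neg z)).congr_deriv (neg_one_smul ℝ _))
      (fun z hz => by simpa using hK (-z) (hneg hz))
      ⟨neg_le_neg hx.2, neg_le_neg hx.1⟩ ⟨neg_le_neg hy.2, neg_le_neg hy.1⟩ (neg_le_neg hyx)
    rw [abs_of_nonpos (sub_nonpos.2 hyx)]
    simpa [sub_eq_add_neg, add_comm] using hreflect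

end Gronwall

section Ladder

open Filter Topology

/-- Two subnormal systems `e`, `o` in `L²(μ)`, with `μ` carried by the open set `U`, that the
first-order operators `d/dx + p` and `d/dx + q` exchange: `eₙ' + p eₙ = κₙ oₙ` and
`oₙ' + q oₙ = -κₙ eₙ`. -/
structure LadderPair (μ : Measure ℝ) (U : Set ℝ) (p q : ℝ → ℝ) (κ : ℕ → ℝ) (e o : ℕ → ℝ → ℝ) :
    Prop where
  isOpen : IsOpen U
  ae_mem : ∀ᵐ x ∂μ, x ∈ U
  measure_Icc_pos : ∀ ⦃a b⦄, a < b → Icc a b ⊆ U → 0 < μ (Icc a b)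
  continuousOn_left : ContinuousOn p U
  continuousOn_right : ContinuousOn q U
  growth : HasPolynomialGrowth κ
  hasDerivAt_left : ∀ n, ∀ x ∈ U, HasDerivAt (e n) (κ n * o n x - p x * e n x) x
  hasDerivAt_right : ∀ n, ∀ x ∈ U, HasDerivAt (o n) (-κ n * e n x - q x * o n x) x
  subnormal_left : IsSubnormal μ e
  subnormal_right : IsSubnormal μ o

/-- The first-order differential operator `f ↦ ε (f' + p f)`. -/
def firstOrderOp (ε : ℝ) (p f : ℝ → ℝ) : ℝ → ℝ := fun x => ε * (deriv f x + p x * f x)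

/-- The composition of `N` alternating factors `A` and `B`, the first one applied being `A`. -/
def altComp (A B : (ℝ → ℝ) → ℝ → ℝ) : ℕ → (ℝ → ℝ) → ℝ → ℝ
  | 0 => fun f => f
  | N + 1 => fun f => (if N % 2 = 0 then A else B) (altComp A B N f)

namespace LadderPair

variable {μ : Measure ℝ} {U : Set ℝ} {p q : ℝ → ℝ} {κ b ℓ : ℕ → ℝ} {e o : ℕ → ℝ → ℝ} {x : ℝ}

theorem swap (P : LadderPair μ U p q κ e o) : LadderPair μ U q p (fun n => -κ n) o e where
  isOpen := P.isOpen
  ae_mem := P.ae_mem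
  measure_Icc_pos := P.measure_Icc_pos
  continuousOn_left := P.continuousOn_right
  continuousOn_right := P.continuousOn_left
  growth := P.growth.neg
  hasDerivAt_left := P.hasDerivAt_right
  hasDerivAt_right := fun n x hx => by simpa using P.hasDerivAt_left n x hx
  subnormal_left := P.subnormal_right
  subnormal_right := P.subnormal_left

theorem hasDerivAt_energy (P : LadderPair μ U p q κ e o) (n : ℕ) (hx : x ∈ U) :
    HasDerivAt (fun y => e n y ^ 2 + o n y ^ 2)
      (-2 * (p x * e n x ^ 2 + q x * o n x ^ 2)) x :=
  (((P.hasDerivAt_left n x hx).pow 2).add ((P.hasDerivAt_right n x hx).pow 2)).congr_deriv (by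
    push_cast; ring)

theorem energy_le_exp_mul_energy (P : LadderPair μ U p q κ e o) {a b Q : ℝ} (hU : Icc a b ⊆ U)
    (hp : ∀ z ∈ Icc a b, |p z| ≤ Q) (hq : ∀ z ∈ Icc a b, |q z| ≤ Q) (n : ℕ) {y : ℝ}
    (hx : x ∈ Icc a b) (hy : y ∈ Icc a b) :
    e n y ^ 2 + o n y ^ 2 ≤ exp (2 * Q * |y - x|) * (e n x ^ 2 + o n x ^ 2) := by
  have henergy (z : ℝ) : ‖e n z ^ 2 + o n z ^ 2‖ = e n z ^ 2 + o n z ^ 2 :=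
    Real.norm_of_nonneg (by positivity)
  have h := norm_le_exp_mul_norm_of_norm_deriv_le (K := 2 * Q)
    (fun z hz => P.hasDerivAt_energy n (hU hz)) (fun z hz => ?_) hx hy
  · rwa [henergy, henergy] at h
  · rw [henergy, norm_mul, norm_neg, Real.norm_two, mul_assoc]
    gcongr
    calc |p z * e n z ^ 2 + q z * o n z ^ 2|
        ≤ |p z| * e n z ^ 2 + |q z| * o n z ^ 2 :=
          (abs_add_le _ _).trans_eq (by rw [abs_mul, abs_mul, abs_sq, abs_sq])
      _ ≤ Q * e n z ^ 2 + Q * o n z ^ 2 := by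
          gcongr
          exacts [hp z hz, hq z hz]
      _ = Q * (e n z ^ 2 + o n z ^ 2) := by ring

theorem exists_energy_le_mul_energy (P : LadderPair μ U p q κ e o) {a b : ℝ} (hU : Icc a b ⊆ U) :
    ∃ R ≥ 0, ∀ n, ∀ x ∈ Icc a b, ∀ y ∈ Icc a b,
      e n x ^ 2 + o n x ^ 2 ≤ R * (e n y ^ 2 + o n y ^ 2) := by
  obtain ⟨Qp, hQp⟩ := isCompact_Icc.exists_bound_of_continuousOn (P.continuousOn_left.mono hU)
  obtain ⟨Qq, hQq⟩ := isCompact_Icc.exists_bound_of_continuousOn (P.continuousOn_right.mono hU)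
  refine ⟨exp (2 * max Qp Qq * (b - a)), (exp_pos _).le, fun n x hx y hy => ?_⟩
  have hQ : 0 ≤ max Qp Qq := (norm_nonneg _).trans ((hQp x hx).trans (le_max_left _ _))
  refine (P.energy_le_exp_mul_energy hU (fun z hz => (hQp z hz).trans (le_max_left _ _))
    (fun z hz => (hQq z hz).trans (le_max_right _ _)) n hy hx).trans ?_
  gcongr
  exact abs_sub_le_of_le_of_le hx.1 hx.2 hy.1 hy.2

theorem exists_energy_le [IsLocallyFiniteMeasure μ] (P : LadderPair μ U p q κ e o) {a b : ℝ}
    (hab : a < b) (hU : Icc a b ⊆ U) :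
    ∃ D, ∀ n, ∀ x ∈ Icc a b, e n x ^ 2 + o n x ^ 2 ≤ D := by
  obtain ⟨R, hR0, hcompare⟩ := P.exists_energy_le_mul_energy hU
  have hfin : μ (Icc a b) ≠ ∞ := isCompact_Icc.measure_lt_top.ne
  have hpos : 0 < μ.real (Icc a b) := ENNReal.toReal_pos (P.measure_Icc_pos hab hU).ne' hfin
  refine ⟨R * 2 / μ.real (Icc a b), fun n x hx => (le_div_iff₀ hpos).2 ?_⟩
  have he := (P.subnormal_left.memLp n).integrable_sq
  have ho := (P.subnormal_right.memLp n).integrable_sq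
  have hR : Integrable (fun y => R * (e n y ^ 2 + o n y ^ 2)) μ := (he.add ho).const_mul R
  calc (e n x ^ 2 + o n x ^ 2) * μ.real (Icc a b)
      = ∫ _ in Icc a b, (e n x ^ 2 + o n x ^ 2) ∂μ := by
        rw [setIntegral_const, smul_eq_mul, mul_comm]
    _ ≤ ∫ y in Icc a b, R * (e n y ^ 2 + o n y ^ 2) ∂μ :=
        setIntegral_mono_on (integrableOn_const hfin) hR.integrableOn measurableSet_Icc
          fun y hy => hcompare n x hx y hy
    _ ≤ ∫ y, R * (e n y ^ 2 + o n y ^ 2) ∂μ :=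
        setIntegral_le_integral hR (.of_forall fun y => by positivity)
    _ = R * (∫ y, e n y ^ 2 ∂μ + ∫ y, o n y ^ 2 ∂μ) := by
        rw [integral_const_mul, integral_add he ho]
    _ ≤ R * 2 := by
        gcongr
        linarith [P.subnormal_left.integral_sq_le_one n, P.subnormal_right.integral_sq_le_one n]

theorem exists_bound_nhds [IsLocallyFiniteMeasure μ] (P : LadderPair μ U p q κ e o) (hx : x ∈ U) :
    ∃ r > 0, Metric.closedBall x r ⊆ U ∧
      ∃ D, ∀ n, ∀ y ∈ Metric.closedBall x r, |e n y| ≤ D ∧ |o n y| ≤ D := by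
  obtain ⟨r, hr, hrU⟩ := Metric.nhds_basis_closedBall.mem_iff.1 (P.isOpen.mem_nhds hx)
  rw [Real.closedBall_eq_Icc] at hrU
  obtain ⟨D, hD⟩ := P.exists_energy_le (by linarith) hrU
  refine ⟨r, hr, by rwa [Real.closedBall_eq_Icc], √D, fun n y hy => ?_⟩
  rw [Real.closedBall_eq_Icc] at hy
  constructor <;> refine Real.abs_le_sqrt (le_trans ?_ (hD n y hy))
  exacts [le_add_of_nonneg_right (sq_nonneg _), le_add_of_nonneg_left (sq_nonneg _)]

theorem hasPolynomialGrowth_left [IsLocallyFiniteMeasure μ] (P : LadderPair μ U p q κ e o)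
    (hx : x ∈ U) : HasPolynomialGrowth fun n => e n x := by
  obtain ⟨r, hr, -, D, hD⟩ := P.exists_bound_nhds hx
  exact .of_bounded fun n => (hD n x (Metric.mem_closedBall_self hr.le)).1

theorem hasDerivAt_tsum_left [IsLocallyFiniteMeasure μ] (P : LadderPair μ U p q κ e o)
    (hb : IsRapidlyDecreasing b) (hx : x ∈ U) :
    HasDerivAt (fun y => ∑' n, b n * e n y)
      (∑' n, b n * κ n * o n x - p x * ∑' n, b n * e n x) x := by
  have hbe := (hb.mul_growth (P.hasPolynomialGrowth_left hx)).summable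
  have hbo := ((hb.mul_growth P.growth).mul_growth (P.swap.hasPolynomialGrowth_left hx)).summable
  obtain ⟨r, hr, hrU, D, hD⟩ := P.exists_bound_nhds hx
  obtain ⟨Q, hQ⟩ :=
    (isCompact_closedBall x r).exists_bound_of_continuousOn (P.continuousOn_left.mono hrU)
  have hmem := Metric.mem_ball_self (x := x) hr
  have hsum : Summable fun n => |b n * κ n| * D + |b n| * (Q * D) :=
    ((hb.mul_growth P.growth).summable.abs.mul_right D).add (hb.summable.abs.mul_right (Q * D))
  have hderiv := hasDerivAt_tsum_of_isPreconnected (g := fun n y => b n * e n y)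
    (g' := fun n y => b n * κ n * o n y - p y * (b n * e n y)) hsum Metric.isOpen_ball
    (convex_ball x r).isPreconnected (fun n y hy => ?_) (fun n y hy => ?_) hmem hbe hmem
  · rwa [(hbo.tsum_sub (hbe.mul_left (p x))), tsum_mul_left] at hderiv
  · have h := (P.hasDerivAt_left n y (hrU (Metric.ball_subset_closedBall hy))).const_mul (b n)
    exact h.congr_deriv (by ring)
  · obtain ⟨hen, hon⟩ := hD n y (Metric.ball_subset_closedBall hy)
    have hp := hQ y (Metric.ball_subset_closedBall hy)
    calc ‖b n * κ n * o n y - p y * (b n * e n y)‖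
        ≤ |b n * κ n| * |o n y| + |b n| * (‖p y‖ * |e n y|) := by
          refine (norm_sub_le _ _).trans_eq ?_
          simp only [norm_mul, Real.norm_eq_abs, abs_mul]
          ring
      _ ≤ |b n * κ n| * D + |b n| * (Q * D) := by
          have hQ0 : 0 ≤ Q := (norm_nonneg _).trans hp
          gcongr

theorem firstOrderOp_tsum_left [IsLocallyFiniteMeasure μ] (P : LadderPair μ U p q κ e o)
    (hb : IsRapidlyDecreasing b) (hx : x ∈ U) (ε : ℝ) {F : ℝ → ℝ}
    (hF : ∀ y ∈ U, F y = ∑' n, b n * e n y) :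
    firstOrderOp ε p F x = ∑' n, b n * (ε * κ n) * o n x := by
  have hlocal : F =ᶠ[𝓝 x] fun y => ∑' n, b n * e n y :=
    (P.isOpen.eventually_mem hx).mono hF
  rw [firstOrderOp, hlocal.deriv_eq, (P.hasDerivAt_tsum_left hb hx).deriv, hF x hx,
    sub_add_cancel, ← tsum_mul_left]
  exact tsum_congr fun n => by ring

theorem altComp_tsum_left [IsLocallyFiniteMeasure μ] (P : LadderPair μ U p q κ e o)
    (hb : IsRapidlyDecreasing b) (ε : ℝ) (N : ℕ) (hx : x ∈ U) :
    altComp (firstOrderOp ε p) (firstOrderOp (-ε) q) N (fun y => ∑' n, b n * e n y) x =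
      ∑' n, b n * (ε * κ n) ^ N * (if N % 2 = 0 then e else o) n x := by
  induction N generalizing x with
  | zero => simp [altComp]
  | succ N ih =>
    have hbN : IsRapidlyDecreasing fun n => b n * (ε * κ n) ^ N :=
      hb.mul_growth (((HasPolynomialGrowth.of_bounded fun _ => le_rfl).mul P.growth).pow N)
    obtain hN | hN := Nat.mod_two_eq_zero_or_one N
    · have hN1 : (N + 1) % 2 ≠ 0 := by omega
      simp only [altComp, hN, hN1, if_true, if_false] at ih ⊢
      rw [P.firstOrderOp_tsum_left hbN hx ε fun y hy => ih hy]
      simp only [pow_succ, mul_assoc]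
    · have hN0 : N % 2 ≠ 0 := by omega
      have hN1 : (N + 1) % 2 = 0 := by omega
      simp only [altComp, hN0, hN1, if_true, if_false] at ih ⊢
      rw [P.swap.firstOrderOp_tsum_left hbN hx (-ε) fun y hy => ih hy]
      simp only [pow_succ, mul_assoc, neg_mul_neg]

theorem hasSum_iterate_deriv_altComp [IsLocallyFiniteMeasure μ] (P : LadderPair μ U p q κ e o)
    (hℓ : IsLinearSpectrum ℓ) {c : ℕ → ℝ} (hc : HasPolynomialGrowth c) (ε : ℝ) (M N : ℕ)
    (hx : x ∈ U) {t : ℝ} (ht : 0 < t) :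
    HasSum (fun n => exp (-t * ℓ n) * ((-ℓ n) ^ M * ((ε * κ n) ^ N * c n)) *
        (if N % 2 = 0 then e else o) n x)
      (deriv^[M] (fun s => altComp (firstOrderOp ε p) (firstOrderOp (-ε) q) N
        (fun y => ∑' n, exp (-s * ℓ n) * c n * e n y) x) t) := by
  set g := if N % 2 = 0 then e else o with hg
  have hgx : HasPolynomialGrowth fun n => g n x := by
    rw [hg]
    split_ifs
    exacts [P.hasPolynomialGrowth_left hx, P.swap.hasPolynomialGrowth_left hx]
  have hd : HasPolynomialGrowth fun n => (ε * κ n) ^ N * c n * g n x :=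
    ((((HasPolynomialGrowth.of_bounded fun _ => le_rfl).mul P.growth).pow N).mul hc).mul hgx
  have hspace (s : ℝ) (hs : 0 < s) :
      altComp (firstOrderOp ε p) (firstOrderOp (-ε) q) N
          (fun y => ∑' n, exp (-s * ℓ n) * c n * e n y) x =
        ∑' n, exp (-s * ℓ n) * ((ε * κ n) ^ N * c n * g n x) := by
    rw [P.altComp_tsum_left ((hℓ.isRapidlyDecreasing_exp hs).mul_growth hc) ε N hx]
    exact tsum_congr fun n => by ring
  rw [hℓ.iterate_deriv_tsum_exp_mul hd hspace M ht]
  simpa only [mul_assoc] using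
    (hℓ.summable_exp_mul ((hℓ.hasPolynomialGrowth.neg.pow M).mul hd) ht).hasSum

theorem lintegral_lintegral_sq_iterate_deriv_le [IsLocallyFiniteMeasure μ]
    (P : LadderPair μ U p q κ e o) (hℓ : IsLinearSpectrum ℓ) {ε : ℝ}
    (hκ : ∀ n, |ε * κ n| ≤ ℓ n) {M N : ℕ} (hMN : 0 < M + N) {f : ℝ → ℝ} (hf : MemLp f 2 μ) :
    ∫⁻ x, (∫⁻ t in Ioi 0, .ofReal
        (deriv^[M] (fun s => altComp (firstOrderOp ε p) (firstOrderOp (-ε) q) N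
          (fun y => ∑' n, exp (-s * ℓ n) * (∫ z, f z * e n z ∂μ) * e n y) x) t ^ 2 *
            t ^ (2 * M + 2 * N - 1))) ∂μ ≤
      .ofReal (2 * M + 2 * N - 1).factorial * ∫⁻ x, .ofReal (f x ^ 2) ∂μ := by
  set c : ℕ → ℝ := fun n => ∫ z, f z * e n z ∂μ
  have hc : HasPolynomialGrowth c := .of_bounded (P.subnormal_left.abs_integral_mul_le hf)
  have hg : IsSubnormal μ (if N % 2 = 0 then e else o) := by
    split_ifs
    exacts [P.subnormal_left, P.subnormal_right]
  refine (hg.lintegral_lintegral_sq_le_tsum (ν := volume.restrict (Ioi 0))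
    (r := fun n t => exp (-t * ℓ n) * ((-ℓ n) ^ M * ((ε * κ n) ^ N * c n)))
    (w := fun t => t ^ (2 * M + 2 * N - 1))
    (fun n => by fun_prop) (by fun_prop) ?_ ?_).trans ?_
  · filter_upwards [ae_restrict_mem measurableSet_Ioi] with t ht
    exact pow_nonneg (le_of_lt ht) _
  · filter_upwards [P.ae_mem] with x hx
    filter_upwards [ae_restrict_mem measurableSet_Ioi] with t ht
    exact P.hasSum_iterate_deriv_altComp hℓ hc ε M N hx ht
  · calc _ ≤ ∑' n, .ofReal (2 * M + 2 * N - 1).factorial * .ofReal (c n ^ 2) :=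
          ENNReal.tsum_le_tsum fun n => lintegral_sq_exp_mul_pow_le (hκ n) (c n) hMN
      _ ≤ .ofReal (2 * M + 2 * N - 1).factorial * ∫⁻ x, .ofReal (f x ^ 2) ∂μ := by
          rw [ENNReal.tsum_mul_left]
          gcongr
          exact P.subnormal_left.tsum_sq_integral_mul_le hf

end LadderPair

end Ladder

section JacobiPolynomial

open Polynomial

/-- The coefficient of `((x - 1) / 2) ^ m` in `jacobiP α β n x`. -/
def jacobiCoeff (α β : ℝ) (n m : ℕ) : ℝ :=
  (Gamma (α + n + 1) * Gamma (α + β + n + m + 1)) /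
    ((m.factorial : ℝ) * ((n - m).factorial : ℝ) * Gamma (α + β + n + 1) * Gamma (α + m + 1))

/-- The Jacobi polynomial as a polynomial in `z = (x - 1) / 2`. -/
def jacobiPoly (α β : ℝ) (n : ℕ) : ℝ[X] :=
  ∑ m ∈ Finset.range (n + 1), C (jacobiCoeff α β n m) * X ^ m

/-- The number `n (n + α + β + 1)`, which is `jLam α β n` less the constant `((α + β + 1) / 2)²`;
it is the eigenvalue of the Jacobi operator `-(d²/dθ² + (jacobiDrift α β) d/dθ)` on
`jacobiCos α β n`. -/
def jacobiEigenvalue (α β : ℝ) (n : ℕ) : ℝ := n * (n + (α + β + 1))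

variable {α β : ℝ}

theorem eval_jacobiPoly (α β : ℝ) (n : ℕ) (x : ℝ) :
    (jacobiPoly α β n).eval ((x - 1) / 2) = jacobiP α β n x := by
  simp [jacobiPoly, jacobiP, jacobiCoeff, eval_finsetSum]

theorem coeff_jacobiPoly (α β : ℝ) (n k : ℕ) :
    (jacobiPoly α β n).coeff k = if k ≤ n then jacobiCoeff α β n k else 0 := by
  simp [jacobiPoly, finsetSum_coeff, coeff_X_pow, Finset.sum_ite_eq]

theorem jacobiCoeff_succ (hα : -1 < α) (hβ : -1 < β) {n k : ℕ} (hk : k < n) :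
    (k + 1) * (k + α + 1) * jacobiCoeff α β n (k + 1) =
      (n - k) * (n + k + (α + β + 1)) * jacobiCoeff α β n k := by
  have hkn : (k : ℝ) + 1 ≤ n := by exact_mod_cast hk
  have : (0 : ℝ) ≤ k := k.cast_nonneg
  have hden : 0 < α + k + 1 := by linarith
  have hnum : 0 < α + β + n + k + 1 := by linarith
  have hΓnum : Gamma (α + β + n + (k + 1 : ℕ) + 1) =
      (α + β + n + k + 1) * Gamma (α + β + n + k + 1) := by
    rw [← Gamma_add_one hnum.ne']
    push_cast
    ring_nf
  have hΓden : Gamma (α + (k + 1 : ℕ) + 1) = (α + k + 1) * Gamma (α + k + 1) := by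
    rw [← Gamma_add_one hden.ne']
    push_cast
    ring_nf
  have hfact : ((n - k).factorial : ℝ) = (n - k) * (n - (k + 1)).factorial := by
    rw [← Nat.mul_factorial_pred (Nat.sub_ne_zero_of_lt hk), Nat.sub_sub, Nat.cast_mul,
      Nat.cast_sub hk.le]
  have hnk : (n : ℝ) - k ≠ 0 := by linarith
  have hΓk : Gamma (α + k + 1) ≠ 0 := (Gamma_pos_of_pos hden).ne'
  have hΓn : Gamma (α + β + n + 1) ≠ 0 := (Gamma_pos_of_pos (by linarith)).ne'
  rw [jacobiCoeff, jacobiCoeff, hΓnum, hΓden, hfact, Nat.factorial_succ]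
  push_cast
  field_simp
  ring

theorem jacobiCoeff_succ_succ (hα : -1 < α) (hβ : -1 < β) (n k : ℕ) :
    jacobiCoeff α β (n + 1) (k + 1) * (k + 1) =
      (n + 1 + (α + β + 1)) * jacobiCoeff (α + 1) (β + 1) n k := by
  have : (0 : ℝ) ≤ n := n.cast_nonneg
  have : (0 : ℝ) ≤ k := k.cast_nonneg
  have hpos : 0 < n + 1 + (α + β + 1) := by linarith
  have hΓden : Gamma (α + 1 + (β + 1) + n + 1) =
      (n + 1 + (α + β + 1)) * Gamma (n + 1 + (α + β + 1)) := by
    rw [← Gamma_add_one hpos.ne']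
    ring_nf
  have hΓn : Gamma (n + 1 + (α + β + 1)) ≠ 0 := (Gamma_pos_of_pos hpos).ne'
  have hΓk : Gamma (α + 1 + k + 1) ≠ 0 := (Gamma_pos_of_pos (by linarith)).ne'
  have hshift₁ : α + (n + 1 : ℕ) + 1 = α + 1 + n + 1 := by push_cast; ring
  have hshift₂ : α + β + (n + 1 : ℕ) + (k + 1 : ℕ) + 1 = α + 1 + (β + 1) + n + k + 1 := by
    push_cast; ring
  have hshift₃ : α + β + (n + 1 : ℕ) + 1 = n + 1 + (α + β + 1) := by push_cast; ring
  have hshift₄ : α + (k + 1 : ℕ) + 1 = α + 1 + k + 1 := by push_cast; ring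
  rw [jacobiCoeff, jacobiCoeff, hshift₁, hshift₂, hshift₃, hshift₄, hΓden, Nat.add_sub_add_right,
    Nat.factorial_succ]
  push_cast
  field_simp

theorem coeff_jacobiPoly_succ (hα : -1 < α) (hβ : -1 < β) (n k : ℕ) :
    (k + 1) * (k + α + 1) * (jacobiPoly α β n).coeff (k + 1) =
      (n - k) * (n + k + (α + β + 1)) * (jacobiPoly α β n).coeff k := by
  rw [coeff_jacobiPoly, coeff_jacobiPoly]
  obtain hk | rfl | hk := lt_trichotomy k n
  · rw [if_pos (Nat.succ_le_of_lt hk), if_pos hk.le, jacobiCoeff_succ hα hβ hk]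
  · simp
  · rw [if_neg (by omega), if_neg (by omega), mul_zero, mul_zero]

theorem derivative_jacobiPoly_succ (hα : -1 < α) (hβ : -1 < β) (n : ℕ) :
    derivative (jacobiPoly α β (n + 1)) =
      C (n + 1 + (α + β + 1)) * jacobiPoly (α + 1) (β + 1) n := by
  ext k
  rw [coeff_derivative, coeff_C_mul, coeff_jacobiPoly, coeff_jacobiPoly]
  by_cases hk : k ≤ n
  · rw [if_pos hk, if_pos (Nat.succ_le_succ hk), jacobiCoeff_succ_succ hα hβ]
  · rw [if_neg hk, if_neg (by omega), zero_mul, mul_zero]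

theorem jacobiPoly_hypergeometric (hα : -1 < α) (hβ : -1 < β) (n : ℕ) :
    X * (1 + X) * derivative (derivative (jacobiPoly α β n)) +
        (C (α + 1) + C (α + β + 2) * X) * derivative (jacobiPoly α β n) =
      C (jacobiEigenvalue α β n) * jacobiPoly α β n := by
  have hcoeff := coeff_jacobiPoly_succ hα hβ n
  generalize jacobiPoly α β n = Q at *
  have hexpand : X * (1 + X) * derivative (derivative Q) +
      (C (α + 1) + C (α + β + 2) * X) * derivative Q =
        X * derivative (derivative Q) + X * (X * derivative (derivative Q)) +
          (C (α + 1) * derivative Q + C (α + β + 2) * (X * derivative Q)) := by ring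
  rw [hexpand]
  ext k
  have h := hcoeff k
  simp only [coeff_add, coeff_C_mul, jacobiEigenvalue]
  rcases k with _ | _ | k <;> simp [coeff_derivative, coeff_X_mul] at h ⊢ <;> linarith

theorem jacobiEigenvalue_zero (α β : ℝ) : jacobiEigenvalue α β 0 = 0 := by
  simp [jacobiEigenvalue]

theorem jacobiEigenvalue_pos (hα : -1 < α) (hβ : -1 < β) {n : ℕ} (hn : n ≠ 0) :
    0 < jacobiEigenvalue α β n := by
  have hn1 : (1 : ℝ) ≤ n := by exact_mod_cast Nat.one_le_iff_ne_zero.2 hn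
  exact mul_pos (by linarith) (by linarith)

theorem jacobiEigenvalue_nonneg (hα : -1 < α) (hβ : -1 < β) (n : ℕ) :
    0 ≤ jacobiEigenvalue α β n := by
  obtain rfl | hn := eq_or_ne n 0
  exacts [(jacobiEigenvalue_zero α β).ge, (jacobiEigenvalue_pos hα hβ hn).le]

theorem jacobiEigenvalue_injective (hα : -1 < α) (hβ : -1 < β) :
    Function.Injective (jacobiEigenvalue α β) := by
  intro n m hnm
  by_contra hne
  have hsum : (1 : ℝ) ≤ n + m := by exact_mod_cast (by omega : 1 ≤ n + m)
  have hfactor : ((n : ℝ) - m) * (n + m + (α + β + 1)) = 0 := by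
    unfold jacobiEigenvalue at hnm
    linear_combination hnm
  obtain h | h := mul_eq_zero.1 hfactor
  · exact hne (by exact_mod_cast sub_eq_zero.1 h)
  · linarith

theorem jacobiEigenvalue_le_jLam (α β : ℝ) (n : ℕ) : jacobiEigenvalue α β n ≤ jLam α β n := by
  unfold jacobiEigenvalue jLam
  nlinarith [sq_nonneg (α + β + 1)]

end JacobiPolynomial

section TrigonometricJacobi

variable {α β θ : ℝ}

/-- The Jacobi polynomial in the variable `θ ↦ cos θ`, without normalization. -/
def jacobiCos (α β : ℝ) (n : ℕ) (θ : ℝ) : ℝ := jacobiP α β n (cos θ)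

/-- The logarithmic derivative of the density `(Ψ^{α,β})²` on `(0, π)`. -/
def jacobiDrift (α β θ : ℝ) : ℝ :=
  (α + 1 / 2) * (cos (θ / 2) / sin (θ / 2)) - (β + 1 / 2) * tan (θ / 2)

theorem sin_half_pos (hθ : θ ∈ Ioo 0 π) : 0 < sin (θ / 2) :=
  sin_pos_of_pos_of_lt_pi (by linarith [hθ.1]) (by linarith [hθ.1, hθ.2])

theorem cos_half_pos (hθ : θ ∈ Ioo 0 π) : 0 < cos (θ / 2) :=
  cos_pos_of_mem_Ioo ⟨by linarith [hθ.1, pi_pos], by linarith [hθ.2]⟩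

theorem sin_eq_two_mul_sin_half_mul_cos_half (θ : ℝ) :
    sin θ = 2 * sin (θ / 2) * cos (θ / 2) := by
  rw [← sin_two_mul, mul_div_cancel₀ θ two_ne_zero]

theorem cos_eq_one_sub_two_mul_sin_half_sq (θ : ℝ) : cos θ = 1 - 2 * sin (θ / 2) ^ 2 := by
  rw [sin_sq_eq_half_sub, mul_div_cancel₀ θ two_ne_zero]
  ring

theorem continuousOn_jacobiDrift (α β : ℝ) : ContinuousOn (jacobiDrift α β) (Ioo 0 π) := by
  unfold jacobiDrift
  simp only [tan_eq_sin_div_cos]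
  have hsin : ∀ θ ∈ Ioo 0 π, sin (θ / 2) ≠ 0 := fun θ hθ => (sin_half_pos hθ).ne'
  have hcos : ∀ θ ∈ Ioo 0 π, cos (θ / 2) ≠ 0 := fun θ hθ => (cos_half_pos hθ).ne'
  fun_prop (disch := assumption)

theorem hasDerivAt_eval_half_cos_sub_one (Q : Polynomial ℝ) (θ : ℝ) :
    HasDerivAt (fun x => Q.eval ((cos x - 1) / 2))
      (-(sin θ / 2) * Q.derivative.eval ((cos θ - 1) / 2)) θ :=
  ((Q.hasDerivAt _).comp θ (((hasDerivAt_cos θ).sub_const 1).div_const 2)).congr_deriv (by ring)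

theorem jacobiCos_eq_eval (α β : ℝ) (n : ℕ) :
    jacobiCos α β n = fun θ => (jacobiPoly α β n).eval ((cos θ - 1) / 2) :=
  funext fun θ => (eval_jacobiPoly α β n (cos θ)).symm

theorem deriv_jacobiCos (α β : ℝ) (n : ℕ) :
    deriv (jacobiCos α β n) =
      fun θ => -(sin θ / 2) * (jacobiPoly α β n).derivative.eval ((cos θ - 1) / 2) := by
  rw [jacobiCos_eq_eval]
  exact funext fun θ => (hasDerivAt_eval_half_cos_sub_one _ θ).deriv

theorem hasDerivAt_jacobiCos (α β : ℝ) (n : ℕ) (θ : ℝ) :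
    HasDerivAt (jacobiCos α β n) (deriv (jacobiCos α β n) θ) θ := by
  rw [deriv_jacobiCos, jacobiCos_eq_eval]
  exact hasDerivAt_eval_half_cos_sub_one _ θ

theorem continuous_jacobiCos (α β : ℝ) (n : ℕ) : Continuous (jacobiCos α β n) :=
  continuous_iff_continuousAt.2 fun θ => (hasDerivAt_jacobiCos α β n θ).continuousAt

theorem continuous_deriv_jacobiCos (α β : ℝ) (n : ℕ) : Continuous (deriv (jacobiCos α β n)) := by
  rw [deriv_jacobiCos]
  fun_prop

theorem deriv_jacobiCos_zero (α β θ : ℝ) : deriv (jacobiCos α β 0) θ = 0 := by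
  simp [deriv_jacobiCos, jacobiPoly]

theorem deriv_jacobiCos_succ (hα : -1 < α) (hβ : -1 < β) (n : ℕ) (θ : ℝ) :
    deriv (jacobiCos α β (n + 1)) θ =
      -(n + 1 + (α + β + 1)) * (sin θ / 2 * jacobiCos (α + 1) (β + 1) n θ) := by
  rw [deriv_jacobiCos, derivative_jacobiPoly_succ hα hβ]
  simp only [Polynomial.eval_mul, Polynomial.eval_C, eval_jacobiPoly, jacobiCos]
  ring

/-- The hypergeometric equation of `jacobiPoly` becomes, under `z = -sin²(θ/2)`, the eigenvalue
equation of the Jacobi operator. -/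
theorem hasDerivAt_deriv_jacobiCos (hα : -1 < α) (hβ : -1 < β) (n : ℕ) (hθ : θ ∈ Ioo 0 π) :
    HasDerivAt (deriv (jacobiCos α β n))
      (-jacobiEigenvalue α β n * jacobiCos α β n θ -
        jacobiDrift α β θ * deriv (jacobiCos α β n) θ) θ := by
  rw [deriv_jacobiCos, jacobiCos_eq_eval]
  set Q := jacobiPoly α β n
  refine (((hasDerivAt_sin θ).div_const 2).neg.mul
    (hasDerivAt_eval_half_cos_sub_one Q.derivative θ)).congr_deriv ?_
  have hz : (cos θ - 1) / 2 = -sin (θ / 2) ^ 2 := by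
    rw [cos_eq_one_sub_two_mul_sin_half_sq]
    ring
  have hode := congrArg (Polynomial.eval ((cos θ - 1) / 2)) (jacobiPoly_hypergeometric hα hβ n)
  simp only [Polynomial.eval_add, Polynomial.eval_mul, Polynomial.eval_X, Polynomial.eval_one,
    Polynomial.eval_C] at hode
  have hdrift : jacobiDrift α β θ * (sin θ / 2) =
      (α + 1 / 2) * cos (θ / 2) ^ 2 - (β + 1 / 2) * sin (θ / 2) ^ 2 := by
    have hsin := (sin_half_pos hθ).ne'
    have hcos := (cos_half_pos hθ).ne'
    rw [jacobiDrift, tan_eq_sin_div_cos, sin_eq_two_mul_sin_half_mul_cos_half θ]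
    field_simp
  have hsin_sq : (sin θ / 2) ^ 2 = sin (θ / 2) ^ 2 * cos (θ / 2) ^ 2 := by
    rw [sin_eq_two_mul_sin_half_mul_cos_half θ]
    ring
  simp only [Pi.neg_apply]
  rw [hz] at hode ⊢
  rw [cos_sq'] at hdrift hsin_sq
  rw [cos_eq_one_sub_two_mul_sin_half_sq]
  linear_combination Q.derivative.derivative.eval (-sin (θ / 2) ^ 2) * hsin_sq -
    hode - Q.derivative.eval (-sin (θ / 2) ^ 2) * hdrift

end TrigonometricJacobi

section JacobiMeasure

variable {α β θ : ℝ}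

theorem measurable_ofReal_jPsi_sq (α β : ℝ) :
    Measurable fun θ => ENNReal.ofReal (jPsi α β θ ^ 2) := by
  unfold jPsi
  fun_prop

theorem jPsi_sq (α β : ℝ) (hθ : θ ∈ Ioo 0 π) :
    jPsi α β θ ^ 2 = sin (θ / 2) ^ (2 * α + 1) * cos (θ / 2) ^ (2 * β + 1) := by
  have hsin := sin_half_pos hθ
  have hcos := cos_half_pos hθ
  rw [jPsi, abs_of_pos hsin, mul_pow, ← rpow_mul_natCast hsin.le, ← rpow_mul_natCast hcos.le]
  congr 2 <;> push_cast <;> ring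

theorem jPsi_sq_pos (α β : ℝ) (hθ : θ ∈ Ioo 0 π) : 0 < jPsi α β θ ^ 2 := by
  rw [jPsi_sq α β hθ]
  exact mul_pos (rpow_pos_of_pos (sin_half_pos hθ) _) (rpow_pos_of_pos (cos_half_pos hθ) _)

theorem rpow_two_mul_add_two {x : ℝ} (hx : x ≠ 0) (a : ℝ) :
    x ^ (2 * a + 2) = x ^ (2 * a + 1) * x := by
  rw [← rpow_add_one hx]
  ring_nf

theorem hasDerivAt_sin_half_rpow (c : ℝ) (hθ : θ ∈ Ioo 0 π) :
    HasDerivAt (fun x => sin (x / 2) ^ c) (c / 2 * sin (θ / 2) ^ (c - 1) * cos (θ / 2)) θ :=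
  (((hasDerivAt_id' θ).div_const 2).sin.rpow_const (.inl (sin_half_pos hθ).ne')).congr_deriv
    (by ring)

theorem hasDerivAt_cos_half_rpow (c : ℝ) (hθ : θ ∈ Ioo 0 π) :
    HasDerivAt (fun x => cos (x / 2) ^ c) (-(c / 2 * cos (θ / 2) ^ (c - 1) * sin (θ / 2))) θ :=
  (((hasDerivAt_id' θ).div_const 2).cos.rpow_const (.inl (cos_half_pos hθ).ne')).congr_deriv
    (by ring)

theorem continuous_sin_half_rpow {c : ℝ} (hc : 0 ≤ c) : Continuous fun θ => sin (θ / 2) ^ c :=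
  (by fun_prop : Continuous fun θ => sin (θ / 2)).rpow_const fun _ => .inr hc

theorem continuous_cos_half_rpow {c : ℝ} (hc : 0 ≤ c) : Continuous fun θ => cos (θ / 2) ^ c :=
  (by fun_prop : Continuous fun θ => cos (θ / 2)).rpow_const fun _ => .inr hc

theorem hasDerivAt_jPsi_sq (α β : ℝ) (hθ : θ ∈ Ioo 0 π) :
    HasDerivAt (fun x => jPsi α β x ^ 2) (jacobiDrift α β θ * jPsi α β θ ^ 2) θ := by
  have hsin := (sin_half_pos hθ).ne'
  have hcos := (cos_half_pos hθ).ne'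
  have hlocal : (fun x => jPsi α β x ^ 2) =ᶠ[nhds θ]
      fun x => sin (x / 2) ^ (2 * α + 1) * cos (x / 2) ^ (2 * β + 1) :=
    (isOpen_Ioo.eventually_mem hθ).mono fun x hx => jPsi_sq α β hx
  refine (((hasDerivAt_sin_half_rpow _ hθ).mul
    (hasDerivAt_cos_half_rpow _ hθ)).congr_of_eventuallyEq hlocal).congr_deriv ?_
  rw [jPsi_sq α β hθ, rpow_sub_one hsin, rpow_sub_one hcos, jacobiDrift, tan_eq_sin_div_cos]
  field_simp
  ring

theorem integrableOn_sin_half_rpow_mul_cos_half (hα : -1 < α) :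
    IntegrableOn (fun θ => sin (θ / 2) ^ (2 * α + 1) * cos (θ / 2)) (Icc 0 π) := by
  rw [integrableOn_Icc_iff_integrableOn_Ioc]
  refine intervalIntegral.integrableOn_deriv_of_nonneg
    (g := fun θ => (α + 1)⁻¹ * sin (θ / 2) ^ (2 * α + 2))
    ((continuous_sin_half_rpow (by linarith)).const_mul _).continuousOn (fun θ hθ => ?_)
    fun θ hθ => mul_nonneg (rpow_nonneg (sin_half_pos hθ).le _) (cos_half_pos hθ).le
  refine ((hasDerivAt_sin_half_rpow (2 * α + 2) hθ).const_mul (α + 1)⁻¹).congr_deriv ?_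
  have hα' : α + 1 ≠ 0 := by linarith
  rw [show 2 * α + 2 - 1 = 2 * α + 1 by ring]
  field_simp

theorem integrableOn_cos_half_rpow_mul_sin_half (hβ : -1 < β) :
    IntegrableOn (fun θ => cos (θ / 2) ^ (2 * β + 1) * sin (θ / 2)) (Icc 0 π) := by
  rw [integrableOn_Icc_iff_integrableOn_Ioc]
  refine intervalIntegral.integrableOn_deriv_of_nonneg
    (g := fun θ => -(β + 1)⁻¹ * cos (θ / 2) ^ (2 * β + 2))
    ((continuous_cos_half_rpow (by linarith)).const_mul _).continuousOn (fun θ hθ => ?_)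
    fun θ hθ => mul_nonneg (rpow_nonneg (cos_half_pos hθ).le _) (sin_half_pos hθ).le
  refine ((hasDerivAt_cos_half_rpow (2 * β + 2) hθ).const_mul (-(β + 1)⁻¹)).congr_deriv ?_
  have hβ' : β + 1 ≠ 0 := by linarith
  rw [show 2 * β + 2 - 1 = 2 * β + 1 by ring]
  field_simp

/-- Multiplying the density by `cos² + sin²` splits off one factor that is continuous and one
that is a derivative of constant sign. -/
theorem integrableOn_jPsi_sq (hα : -1 < α) (hβ : -1 < β) :
    IntegrableOn (fun θ => jPsi α β θ ^ 2) (Ioo 0 π) := by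
  have hcos := (integrableOn_sin_half_rpow_mul_cos_half hα).mul_continuousOn
    (continuous_cos_half_rpow (c := 2 * β + 2) (by linarith)).continuousOn isCompact_Icc
  have hsin := (integrableOn_cos_half_rpow_mul_sin_half hβ).mul_continuousOn
    (continuous_sin_half_rpow (c := 2 * α + 2) (by linarith)).continuousOn isCompact_Icc
  refine ((hcos.add hsin).mono_set Ioo_subset_Icc_self).congr_fun (fun θ hθ => ?_)
    measurableSet_Ioo
  simp only [Pi.add_apply, jPsi_sq α β hθ, rpow_two_mul_add_two (cos_half_pos hθ).ne',
    rpow_two_mul_add_two (sin_half_pos hθ).ne']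
  linear_combination
    sin (θ / 2) ^ (2 * α + 1) * cos (θ / 2) ^ (2 * β + 1) * sin_sq_add_cos_sq (θ / 2)

theorem integrableOn_mul_jPsi_sq (hα : -1 < α) (hβ : -1 < β) {g : ℝ → ℝ} (hg : Continuous g) :
    IntegrableOn (fun θ => g θ * jPsi α β θ ^ 2) (Ioo 0 π) := by
  have hw := integrableOn_jPsi_sq hα hβ
  rw [← integrableOn_Icc_iff_integrableOn_Ioo] at hw ⊢
  exact hw.continuousOn_mul hg.continuousOn isCompact_Icc

theorem jacobiMeasurePlus_eq_withDensity (α β : ℝ) :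
    jacobiMeasurePlus α β =
      (volume.restrict (Ioo 0 π)).withDensity fun θ => .ofReal (jPsi α β θ ^ 2) := by
  rw [jacobiMeasurePlus, jacobiMeasure, restrict_withDensity measurableSet_Ioo,
    Measure.restrict_restrict measurableSet_Ioo,
    inter_eq_left.2 (Ioo_subset_Ioo_left (neg_nonpos.2 pi_pos.le))]

theorem isFiniteMeasure_jacobiMeasurePlus (hα : -1 < α) (hβ : -1 < β) :
    IsFiniteMeasure (jacobiMeasurePlus α β) := by
  rw [jacobiMeasurePlus_eq_withDensity]
  exact isFiniteMeasure_withDensity_ofReal (integrableOn_jPsi_sq hα hβ).2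

theorem ae_mem_Ioo_jacobiMeasurePlus (α β : ℝ) :
    ∀ᵐ θ ∂jacobiMeasurePlus α β, θ ∈ Ioo 0 π :=
  ae_restrict_mem measurableSet_Ioo

theorem integral_jacobiMeasurePlus (α β : ℝ) (g : ℝ → ℝ) :
    ∫ θ, g θ ∂jacobiMeasurePlus α β = ∫ θ in Ioo 0 π, g θ * jPsi α β θ ^ 2 := by
  rw [jacobiMeasurePlus_eq_withDensity,
    integral_withDensity_eq_integral_toReal_smul (measurable_ofReal_jPsi_sq α β)
      (.of_forall fun _ => ENNReal.ofReal_lt_top)]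
  simp only [ENNReal.toReal_ofReal (sq_nonneg _), smul_eq_mul, mul_comm]

theorem jacobiMeasurePlus_Icc_pos (α β : ℝ) {a b : ℝ} (hab : a < b) (hsub : Icc a b ⊆ Ioo 0 π) :
    0 < jacobiMeasurePlus α β (Icc a b) := by
  rw [jacobiMeasurePlus_eq_withDensity, withDensity_apply _ measurableSet_Icc,
    Measure.restrict_restrict measurableSet_Icc, inter_eq_left.2 hsub,
    setLIntegral_pos_iff (measurable_ofReal_jPsi_sq α β), inter_eq_right.2 fun θ hθ => ?_]
  · simpa using hab
  · exact (ENNReal.ofReal_pos.2 (jPsi_sq_pos α β (hsub hθ))).ne'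

theorem memLp_two_jacobiMeasurePlus (hα : -1 < α) (hβ : -1 < β) {g : ℝ → ℝ} (hg : Continuous g) :
    MemLp g 2 (jacobiMeasurePlus α β) := by
  have := isFiniteMeasure_jacobiMeasurePlus hα hβ
  obtain ⟨B, hB⟩ := isCompact_Icc.exists_bound_of_continuousOn hg.continuousOn (s := Icc 0 π)
  exact .of_bound hg.aestronglyMeasurable B <|
    (ae_mem_Ioo_jacobiMeasurePlus α β).mono fun θ hθ => hB θ (Ioo_subset_Icc_self hθ)

theorem exists_continuous_eq_jPsi_sq_mul_deriv_jacobiCos (hα : -1 < α) (hβ : -1 < β) (n : ℕ) :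
    ∃ V : ℝ → ℝ, Continuous V ∧ V 0 = 0 ∧ V π = 0 ∧
      ∀ θ ∈ Ioo 0 π, V θ = jPsi α β θ ^ 2 * deriv (jacobiCos α β n) θ := by
  have hα' : 0 < 2 * α + 2 := by linarith
  have hβ' : 0 < 2 * β + 2 := by linarith
  refine ⟨fun θ => -(sin (θ / 2) ^ (2 * α + 2) * cos (θ / 2) ^ (2 * β + 2)) *
    (jacobiPoly α β n).derivative.eval ((cos θ - 1) / 2), ?_, ?_, ?_, fun θ hθ => ?_⟩
  · exact ((continuous_sin_half_rpow hα'.le).mul (continuous_cos_half_rpow hβ'.le)).neg.mul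
      (by fun_prop)
  · simp [zero_rpow hα'.ne']
  · simp [zero_rpow hβ'.ne']
  · simp only [jPsi_sq α β hθ, deriv_jacobiCos, rpow_two_mul_add_two (sin_half_pos hθ).ne',
      rpow_two_mul_add_two (cos_half_pos hθ).ne', sin_eq_two_mul_sin_half_mul_cos_half θ]
    ring

theorem hasDerivAt_jPsi_sq_mul_deriv_jacobiCos (hα : -1 < α) (hβ : -1 < β) (n : ℕ)
    (hθ : θ ∈ Ioo 0 π) :
    HasDerivAt (fun x => jPsi α β x ^ 2 * deriv (jacobiCos α β n) x)
      (-jacobiEigenvalue α β n * jacobiCos α β n θ * jPsi α β θ ^ 2) θ :=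
  ((hasDerivAt_jPsi_sq α β hθ).mul (hasDerivAt_deriv_jacobiCos hα hβ n hθ)).congr_deriv (by ring)

theorem integral_deriv_jacobiCos_mul_deriv_jacobiCos (hα : -1 < α) (hβ : -1 < β) (n m : ℕ) :
    ∫ θ, deriv (jacobiCos α β n) θ * deriv (jacobiCos α β m) θ ∂jacobiMeasurePlus α β =
      jacobiEigenvalue α β n * ∫ θ, jacobiCos α β n θ * jacobiCos α β m θ
        ∂jacobiMeasurePlus α β := by
  obtain ⟨V, hVcont, hV0, hVπ, hV⟩ :=
    exists_continuous_eq_jPsi_sq_mul_deriv_jacobiCos hα hβ n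
  have hderiv := integrableOn_mul_jPsi_sq hα hβ
    ((continuous_deriv_jacobiCos α β n).fun_mul (continuous_deriv_jacobiCos α β m))
  have hcos := (integrableOn_mul_jPsi_sq hα hβ
    ((continuous_jacobiCos α β n).fun_mul (continuous_jacobiCos α β m))).const_mul
      (jacobiEigenvalue α β n)
  have hVderiv : ∀ θ ∈ Ioo 0 π, HasDerivAt (fun x => V x * jacobiCos α β m x)
      (deriv (jacobiCos α β n) θ * deriv (jacobiCos α β m) θ * jPsi α β θ ^ 2 -
        jacobiEigenvalue α β n * (jacobiCos α β n θ * jacobiCos α β m θ * jPsi α β θ ^ 2)) θ := by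
    intro θ hθ
    have hV' := (hasDerivAt_jPsi_sq_mul_deriv_jacobiCos hα hβ n hθ).congr_of_eventuallyEq
      ((isOpen_Ioo.eventually_mem hθ).mono hV)
    refine (hV'.mul (hasDerivAt_jacobiCos α β m θ)).congr_deriv ?_
    rw [hV θ hθ]
    ring
  have hftc := intervalIntegral.integral_eq_sub_of_hasDerivAt_of_le pi_pos.le
    (hVcont.fun_mul (continuous_jacobiCos α β m)).continuousOn hVderiv
    ((intervalIntegrable_iff_integrableOn_Ioo_of_le pi_pos.le).2 (hderiv.sub hcos))
  rw [intervalIntegral.integral_of_le pi_pos.le, integral_Ioc_eq_integral_Ioo,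
    integral_sub hderiv hcos, hV0, hVπ, integral_const_mul, zero_mul, zero_mul, sub_zero] at hftc
  rw [integral_jacobiMeasurePlus, integral_jacobiMeasurePlus]
  exact sub_eq_zero.1 hftc

theorem integral_jacobiCos_mul_jacobiCos_eq_zero (hα : -1 < α) (hβ : -1 < β) {n m : ℕ}
    (hnm : n ≠ m) :
    ∫ θ, jacobiCos α β n θ * jacobiCos α β m θ ∂jacobiMeasurePlus α β = 0 := by
  have hparts := integral_deriv_jacobiCos_mul_deriv_jacobiCos hα hβ m n
  simp only [mul_comm (deriv (jacobiCos α β m) _), mul_comm (jacobiCos α β m _)] at hparts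
  rw [integral_deriv_jacobiCos_mul_deriv_jacobiCos hα hβ] at hparts
  have hne := (jacobiEigenvalue_injective hα hβ).ne hnm
  exact (mul_eq_mul_right_iff.1 hparts).resolve_left hne

theorem integral_deriv_jacobiCos_mul_deriv_jacobiCos_eq_zero (hα : -1 < α) (hβ : -1 < β)
    {n m : ℕ} (hnm : n ≠ m) :
    ∫ θ, deriv (jacobiCos α β n) θ * deriv (jacobiCos α β m) θ ∂jacobiMeasurePlus α β = 0 := by
  rw [integral_deriv_jacobiCos_mul_deriv_jacobiCos hα hβ,
    integral_jacobiCos_mul_jacobiCos_eq_zero hα hβ hnm, mul_zero]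

end JacobiMeasure

section JacobiLadder

variable {α β : ℝ} {a : ℕ → ℝ}

theorem isLinearSpectrum_sqrt_jLam (α β : ℝ) (k : ℕ) :
    IsLinearSpectrum fun n => √(jLam α β (n + k)) where
  nonneg _ := sqrt_nonneg _
  exists_abs_sub_le := by
    refine ⟨|k + (α + β + 1) / 2|, fun n => ?_⟩
    rw [jLam, sqrt_sq_eq_abs, ← Nat.abs_cast n]
    refine (abs_abs_sub_abs_le _ _).trans_eq ?_
    rw [Nat.cast_add]
    ring_nf

theorem abs_sqrt_jacobiEigenvalue_le_sqrt_jLam (α β : ℝ) (n : ℕ) :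
    |√(jacobiEigenvalue α β n)| ≤ √(jLam α β n) := by
  rw [abs_of_nonneg (sqrt_nonneg _)]
  exact sqrt_le_sqrt (jacobiEigenvalue_le_jLam α β n)

theorem sqrt_jacobiEigenvalue_mul_div_sqrt_mul_deriv (hα : -1 < α) (hβ : -1 < β) (c : ℝ) (n : ℕ)
    (θ : ℝ) :
    √(jacobiEigenvalue α β n) *
        (c / √(jacobiEigenvalue α β n) * deriv (jacobiCos α β n) θ) =
      c * deriv (jacobiCos α β n) θ := by
  obtain rfl | hn := eq_or_ne n 0
  · simp [deriv_jacobiCos_zero]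
  · have h := (sqrt_pos.2 (jacobiEigenvalue_pos hα hβ hn)).ne'
    field_simp

theorem div_sqrt_jacobiEigenvalue_sq_mul_integral_le_one (hα : -1 < α) (hβ : -1 < β) {c : ℝ} {n : ℕ}
    (hc : c ^ 2 * ∫ θ, jacobiCos α β n θ ^ 2 ∂jacobiMeasurePlus α β ≤ 1) :
    (c / √(jacobiEigenvalue α β n)) ^ 2 *
      ∫ θ, deriv (jacobiCos α β n) θ ^ 2 ∂jacobiMeasurePlus α β ≤ 1 := by
  have hparts := integral_deriv_jacobiCos_mul_deriv_jacobiCos hα hβ n n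
  simp only [← sq] at hparts
  rw [hparts, div_pow, sq_sqrt (jacobiEigenvalue_nonneg hα hβ n)]
  obtain rfl | hn := eq_or_ne n 0
  · simp [jacobiEigenvalue_zero]
  · rwa [← mul_assoc, div_mul_cancel₀ _ (jacobiEigenvalue_pos hα hβ hn).ne']

theorem ladderPair_jacobiCos (hα : -1 < α) (hβ : -1 < β) (k : ℕ)
    (ha : ∀ n, a n ^ 2 * ∫ θ, jacobiCos α β (n + k) θ ^ 2 ∂jacobiMeasurePlus α β ≤ 1) :
    LadderPair (jacobiMeasurePlus α β) (Ioo 0 π) 0 (jacobiDrift α β)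
      (fun n => √(jacobiEigenvalue α β (n + k)))
      (fun n θ => a n * jacobiCos α β (n + k) θ)
      (fun n θ => a n / √(jacobiEigenvalue α β (n + k)) * deriv (jacobiCos α β (n + k)) θ) where
  isOpen := isOpen_Ioo
  ae_mem := ae_mem_Ioo_jacobiMeasurePlus α β
  measure_Icc_pos _ _ := jacobiMeasurePlus_Icc_pos α β
  continuousOn_left := continuousOn_const
  continuousOn_right := continuousOn_jacobiDrift α β
  growth := (isLinearSpectrum_sqrt_jLam α β k).hasPolynomialGrowth.mono fun n =>
    abs_sqrt_jacobiEigenvalue_le_sqrt_jLam α β (n + k)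
  hasDerivAt_left n θ _ := by
    rw [sqrt_jacobiEigenvalue_mul_div_sqrt_mul_deriv hα hβ, Pi.zero_apply, zero_mul, sub_zero]
    exact (hasDerivAt_jacobiCos α β (n + k) θ).const_mul (a n)
  hasDerivAt_right n θ hθ := by
    refine ((hasDerivAt_deriv_jacobiCos hα hβ (n + k) hθ).const_mul _).congr_deriv ?_
    linear_combination (-a n * jacobiCos α β (n + k) θ) *
      div_sqrt (x := jacobiEigenvalue α β (n + k))
  subnormal_left := .of_orthogonal
    (fun n => memLp_two_jacobiMeasurePlus hα hβ (continuous_jacobiCos α β (n + k)))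
    (fun _ _ hnm => integral_jacobiCos_mul_jacobiCos_eq_zero hα hβ
      ((add_left_injective k).ne hnm)) ha
  subnormal_right := .of_orthogonal
    (fun n => memLp_two_jacobiMeasurePlus hα hβ (continuous_deriv_jacobiCos α β (n + k)))
    (fun _ _ hnm => integral_deriv_jacobiCos_mul_deriv_jacobiCos_eq_zero hα hβ
      ((add_left_injective k).ne hnm))
    fun n => div_sqrt_jacobiEigenvalue_sq_mul_integral_le_one hα hβ (ha n)

theorem cJ_sq_mul_integral_le_one (α β : ℝ) (n : ℕ) :
    cJ α β n ^ 2 * ∫ θ, jacobiCos α β n θ ^ 2 ∂jacobiMeasurePlus α β ≤ 1 := by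
  unfold cJ jacobiCos
  have hnonneg : 0 ≤ ∫ θ, jacobiP α β n (cos θ) ^ 2 ∂jacobiMeasurePlus α β :=
    integral_nonneg fun θ => sq_nonneg _
  generalize ∫ θ, jacobiP α β n (cos θ) ^ 2 ∂jacobiMeasurePlus α β = I at *
  rw [← rpow_mul_natCast hnonneg, show -(1 / 2) * ((2 : ℕ) : ℝ) = -1 by norm_num, rpow_neg_one]
  exact inv_mul_le_one

theorem inv_sqrt_two_mul_sq (c : ℝ) : ((√2)⁻¹ * c) ^ 2 = c ^ 2 / 2 := by
  rw [mul_pow, inv_pow, sq_sqrt zero_le_two]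
  ring

theorem symPhi_two_mul (α β : ℝ) (n : ℕ) :
    symPhi α β (2 * n) = fun θ => (√2)⁻¹ * cJ α β n * jacobiCos α β n θ := by
  funext θ
  rw [symPhi, if_pos (even_two_mul n), Nat.mul_div_cancel_left n two_pos, trigP, jacobiCos,
    mul_assoc]

theorem symPhi_two_mul_add_one (α β : ℝ) (n : ℕ) :
    symPhi α β (2 * n + 1) =
      fun θ => (√2)⁻¹ * cJ (α + 1) (β + 1) n * (sin θ / 2 * jacobiCos (α + 1) (β + 1) n θ) := by
  funext θ
  rw [symPhi, if_neg (by simp), Nat.add_sub_cancel, Nat.mul_div_cancel_left n two_pos, trigP,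
    jacobiCos]
  ring

theorem integral_sin_half_mul_jacobiCos_sq (α β : ℝ) (n : ℕ) :
    ∫ θ, (sin θ / 2 * jacobiCos (α + 1) (β + 1) n θ) ^ 2 ∂jacobiMeasurePlus α β =
      ∫ θ, jacobiCos (α + 1) (β + 1) n θ ^ 2 ∂jacobiMeasurePlus (α + 1) (β + 1) := by
  rw [integral_jacobiMeasurePlus, integral_jacobiMeasurePlus]
  refine setIntegral_congr_fun measurableSet_Ioo fun θ hθ => ?_
  have hpow {x : ℝ} (hx : 0 < x) (γ : ℝ) : x ^ (2 * (γ + 1) + 1) = x ^ (2 * γ + 1) * x ^ 2 := by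
    rw [← rpow_add_natCast hx.ne']
    push_cast
    ring_nf
  simp only [jPsi_sq α β hθ, jPsi_sq (α + 1) (β + 1) hθ, hpow (sin_half_pos hθ),
    hpow (cos_half_pos hθ), sin_eq_two_mul_sin_half_mul_cos_half θ]
  ring

theorem ladderPair_symPhi_even (hα : -1 < α) (hβ : -1 < β) :
    ∃ o, LadderPair (jacobiMeasurePlus α β) (Ioo 0 π) 0 (jacobiDrift α β)
      (fun n => √(jacobiEigenvalue α β n)) (fun n => symPhi α β (2 * n)) o := by
  simp only [symPhi_two_mul]
  refine ⟨_, ladderPair_jacobiCos hα hβ 0 fun n => ?_⟩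
  rw [add_zero, inv_sqrt_two_mul_sq, div_mul_eq_mul_div]
  linarith [cJ_sq_mul_integral_le_one α β n]

theorem exists_symPhi_two_mul_add_one_eq_const_mul_deriv (hα : -1 < α) (hβ : -1 < β) (n : ℕ) :
    ∃ b : ℝ, symPhi α β (2 * n + 1) = fun θ => b * deriv (jacobiCos α β (n + 1)) θ := by
  have hd : (n : ℝ) + 1 + (α + β + 1) ≠ 0 := by
    linarith [n.cast_nonneg (α := ℝ)]
  refine ⟨-((√2)⁻¹ * cJ (α + 1) (β + 1) n / (n + 1 + (α + β + 1))), ?_⟩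
  funext θ
  rw [symPhi_two_mul_add_one, deriv_jacobiCos_succ hα hβ]
  field_simp

theorem integral_symPhi_two_mul_add_one_sq_le_one (α β : ℝ) (n : ℕ) :
    ∫ θ, symPhi α β (2 * n + 1) θ ^ 2 ∂jacobiMeasurePlus α β ≤ 1 := by
  simp only [symPhi_two_mul_add_one, mul_pow _ (_ * jacobiCos _ _ _ _), integral_const_mul]
  rw [integral_sin_half_mul_jacobiCos_sq, inv_sqrt_two_mul_sq, div_mul_eq_mul_div]
  linarith [cJ_sq_mul_integral_le_one (α + 1) (β + 1) n]

theorem ladderPair_symPhi_odd (hα : -1 < α) (hβ : -1 < β) :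
    ∃ e, LadderPair (jacobiMeasurePlus α β) (Ioo 0 π) 0 (jacobiDrift α β)
      (fun n => √(jacobiEigenvalue α β (n + 1))) e (fun n => symPhi α β (2 * n + 1)) := by
  choose b hb using exists_symPhi_two_mul_add_one_eq_const_mul_deriv hα hβ
  have hpos (n : ℕ) := jacobiEigenvalue_pos hα hβ n.succ_ne_zero
  have hladder := ladderPair_jacobiCos hα hβ 1 (a := fun n => b n * √(jacobiEigenvalue α β (n + 1)))
    fun n => by
      have hle := integral_symPhi_two_mul_add_one_sq_le_one α β n
      have hparts := integral_deriv_jacobiCos_mul_deriv_jacobiCos hα hβ (n + 1) (n + 1)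
      simp only [← sq] at hparts
      simpa only [hb, mul_pow, integral_const_mul, hparts, sq_sqrt (hpos n).le, mul_assoc] using hle
  simp only [mul_div_cancel_right₀ _ (sqrt_pos.2 (hpos _)).ne'] at hladder
  simp only [hb]
  exact ⟨_, hladder⟩

end JacobiLadder

section SquareFunctions

variable {α β : ℝ} {M N : ℕ} {f : ℝ → ℝ}

theorem deriv_eq_firstOrderOp : (deriv : (ℝ → ℝ) → ℝ → ℝ) = firstOrderOp 1 0 := by
  funext f θ
  simp [firstOrderOp]

theorem delStar_eq_firstOrderOp (α β : ℝ) :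
    delStar α β = firstOrderOp (-1) (jacobiDrift α β) := by
  funext f θ
  rw [delStar, firstOrderOp, jacobiDrift]
  ring

theorem deltaEven_eq_altComp (α β : ℝ) (N : ℕ) :
    deltaEven α β N = altComp (firstOrderOp 1 0) (firstOrderOp (-1) (jacobiDrift α β)) N := by
  induction N with
  | zero => rfl
  | succ N ih => rw [deltaEven, altComp, ih, delStar_eq_firstOrderOp, deriv_eq_firstOrderOp]

theorem deltaOdd_eq_altComp (α β : ℝ) (N : ℕ) :
    deltaOdd α β N = altComp (firstOrderOp (-1) (jacobiDrift α β)) (firstOrderOp 1 0) N := by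
  induction N with
  | zero => rfl
  | succ N ih => rw [deltaOdd, altComp, ih, delStar_eq_firstOrderOp, deriv_eq_firstOrderOp]

theorem rpow_half_sq (x : ℝ≥0∞) : (x ^ (1 / 2 : ℝ)) ^ 2 = x := by
  rw [← ENNReal.rpow_mul_natCast]
  norm_num

theorem lintegral_restG_sq_le (hα : -1 < α) (hβ : -1 < β) (hMN : 0 < M + N)
    (hf : MemLp f 2 (jacobiMeasurePlus α β)) :
    ∫⁻ θ, restG α β M N f θ ^ 2 ∂jacobiMeasurePlus α β ≤
      .ofReal (2 * M + 2 * N - 1).factorial *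
        ∫⁻ θ, .ofReal (f θ ^ 2) ∂jacobiMeasurePlus α β := by
  have := isFiniteMeasure_jacobiMeasurePlus hα hβ
  obtain ⟨o, hladder⟩ := ladderPair_symPhi_even hα hβ
  simp only [restG, rpow_half_sq, deltaEven_eq_altComp, restH]
  exact hladder.lintegral_lintegral_sq_iterate_deriv_le (isLinearSpectrum_sqrt_jLam α β 0)
    (fun n => by
      simpa only [one_mul, add_zero] using abs_sqrt_jacobiEigenvalue_le_sqrt_jLam α β n)
    hMN hf

theorem lintegral_restGtil_sq_le (hα : -1 < α) (hβ : -1 < β) (hMN : 0 < M + N)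
    (hf : MemLp f 2 (jacobiMeasurePlus α β)) :
    ∫⁻ θ, restGtil α β M N f θ ^ 2 ∂jacobiMeasurePlus α β ≤
      .ofReal (2 * M + 2 * N - 1).factorial *
        ∫⁻ θ, .ofReal (f θ ^ 2) ∂jacobiMeasurePlus α β := by
  have := isFiniteMeasure_jacobiMeasurePlus hα hβ
  obtain ⟨e, hladder⟩ := ladderPair_symPhi_odd hα hβ
  have hbound := hladder.swap.lintegral_lintegral_sq_iterate_deriv_le (ε := -1)
    (isLinearSpectrum_sqrt_jLam α β 1)
    (fun n => by
      simpa only [neg_mul_neg, one_mul] using abs_sqrt_jacobiEigenvalue_le_sqrt_jLam α β (n + 1))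
    hMN hf
  rw [neg_neg] at hbound
  simpa only [restGtil, rpow_half_sq, deltaOdd_eq_altComp, restHtil] using hbound

theorem rpow_half_le_ofReal_sqrt_mul {c : ℝ} (hc : 0 ≤ c) {x y : ℝ≥0∞} (h : x ≤ .ofReal c * y) :
    x ^ (1 / 2 : ℝ) ≤ .ofReal √c * y ^ (1 / 2 : ℝ) := by
  calc x ^ (1 / 2 : ℝ) ≤ (.ofReal c * y) ^ (1 / 2 : ℝ) := by gcongr
    _ = .ofReal √c * y ^ (1 / 2 : ℝ) := by
      rw [ENNReal.mul_rpow_of_nonneg _ _ (by norm_num), sqrt_eq_rpow,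
        ENNReal.ofReal_rpow_of_nonneg hc (by norm_num)]

theorem memLp_two_of_lintegral_sq_lt_top {Ω : Type*} [MeasurableSpace Ω] {μ : Measure Ω}
    {f : Ω → ℝ} (hf : Measurable f)
    (hfin : ∫⁻ x, .ofReal (f x ^ 2) ∂μ < ∞) : MemLp f 2 μ :=
  (memLp_two_iff_integrable_sq hf.aestronglyMeasurable).2
    ((lintegral_ofReal_ne_top_iff_integrable (by fun_prop) (.of_forall fun _ => sq_nonneg _)).1
      hfin.ne)

end SquareFunctions

/-- Theorem (L²(μ⁺) boundedness of the restricted square functions). -/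
theorem restrictedSquareFunctions_L2_bounded (α β : ℝ) (hα : -1 < α) (hβ : -1 < β)
    (M N : ℕ) (hMN : 0 < M + N) :
    ∃ C : ℝ, 0 < C ∧ ∀ f : ℝ → ℝ, Measurable f →
      (∫⁻ θ, ENNReal.ofReal (f θ ^ 2) ∂(jacobiMeasurePlus α β)) < ∞ →
      (∫⁻ θ, restG α β M N f θ ^ 2 ∂(jacobiMeasurePlus α β)) ^ (1 / 2 : ℝ) ≤
          ENNReal.ofReal C *
            (∫⁻ θ, ENNReal.ofReal (f θ ^ 2) ∂(jacobiMeasurePlus α β)) ^ (1 / 2 : ℝ) ∧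
      (∫⁻ θ, restGtil α β M N f θ ^ 2 ∂(jacobiMeasurePlus α β)) ^ (1 / 2 : ℝ) ≤
          ENNReal.ofReal C *
            (∫⁻ θ, ENNReal.ofReal (f θ ^ 2) ∂(jacobiMeasurePlus α β)) ^ (1 / 2 : ℝ) := by
  have hC : (0 : ℝ) < (2 * M + 2 * N - 1).factorial := mod_cast Nat.factorial_pos _
  refine ⟨√(2 * M + 2 * N - 1).factorial, sqrt_pos.2 hC, fun f hf hfin => ?_⟩
  have hf2 := memLp_two_of_lintegral_sq_lt_top hf hfin
  exact ⟨rpow_half_le_ofReal_sqrt_mul hC.le (lintegral_restG_sq_le hα hβ hMN hf2),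
    rpow_half_le_ofReal_sqrt_mul hC.le (lintegral_restGtil_sq_le hα hβ hMN hf2)⟩

end
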